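/- Let b > 0 be real, and let u, x ∈ ℂ satisfy −(b+b⁻¹)/2 < Im x < 0, |Im u| < (b+b⁻¹)/2, and |Im(u−x)| < (b+b⁻¹)/2. Then for every ε with 0 < ε < −Im x, the integral ∫_ℝ e^{−2πi(t−iε)(u+c_b)} · e_b(t−iε+c_b) / e_b(t−iε−x−c_b) dt converges absolutely, its value is independent of ε, and it equals ζ₀⁻¹ · e_b(u−x) / ( e_b(−x−c_b) · e_b(u) ), where ζ₀ := e^{πi(1−4c_b²)/12}. (All arguments of e_b occurring here lie in the strip |Im z| < (b+b⁻¹)/2, so e_b is given directly by its integral representation.) -/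

import Mathlib

open MeasureTheory Complex Real Filter Topology

noncomputable section

/-- The special point `c_b = i(b+b⁻¹)/2`. -/
def cb (b : ℝ) : ℂ := Complex.I * ((b : ℂ) + (b : ℂ)⁻¹) / 2

/-- The integrand in the integral representation of the noncompact quantum dilogarithm. -/
def ebIntegrand (b ε : ℝ) (z : ℂ) (t : ℝ) : ℂ :=
  Complex.exp (-2 * Complex.I * z * ((t : ℂ) + Complex.I * (ε : ℂ))) /
    (((t : ℂ) + Complex.I * (ε : ℂ)) *
      Complex.sinh ((b : ℂ) * ((t : ℂ) + Complex.I * (ε : ℂ))) *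
      Complex.sinh ((b : ℂ)⁻¹ * ((t : ℂ) + Complex.I * (ε : ℂ))))

/-- The noncompact quantum dilogarithm defined with contour parameter `ε`. -/
def ebE (b ε : ℝ) (z : ℂ) : ℂ :=
  Complex.exp ((1 / 4 : ℂ) * ∫ t : ℝ, ebIntegrand b ε z t)

/-- The noncompact quantum dilogarithm `e_b` (canonical choice of contour parameter;
the value is independent of this choice). -/
def eb (b : ℝ) (z : ℂ) : ℂ := ebE b (π * min b b⁻¹ / 2) z

/-- The constant `ζ₀ = e^{πi(1−4c_b²)/12}`. -/
def zeta0 (b : ℝ) : ℂ := Complex.exp ((π : ℂ) * Complex.I * (1 - 4 * (cb b) ^ 2) / 12)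

/-- The integrand of STATEMENT 9, along the contour `ℝ − iε`. -/
def stmt9Integrand (b : ℝ) (u x : ℂ) (ε : ℝ) (t : ℝ) : ℂ :=
  Complex.exp (-2 * (π : ℂ) * Complex.I * ((t : ℂ) - Complex.I * (ε : ℂ)) * (u + cb b)) *
    eb b ((t : ℂ) - Complex.I * (ε : ℂ) + cb b) /
    eb b ((t : ℂ) - Complex.I * (ε : ℂ) - x - cb b)

/-- `e^{-d|t|}` is integrable. -/
lemma qd_integrable_exp_abs {d : ℝ} (hd : 0 < d) :
    Integrable (fun t : ℝ => Real.exp (-d * |t|)) := by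
  rw [← integrableOn_univ, ← Set.Iic_union_Ioi (a := (0:ℝ)), integrableOn_union]
  constructor
  · have h := (integrableOn_exp_mul_Iic hd 0)
    refine h.congr_fun ?_ measurableSet_Iic
    intro t ht
    simp only [Set.mem_Iic] at ht
    simp [abs_of_nonpos ht]
  · have h := integrableOn_exp_mul_Ioi (a := -d) (by linarith) 0
    refine h.congr_fun ?_ measurableSet_Ioi
    intro t ht
    simp only [Set.mem_Ioi] at ht
    simp [abs_of_pos ht]

/-- The closed horizontal strip. -/
def qdStrip (α β : ℝ) : Set ℂ := {w | α ≤ w.im ∧ w.im ≤ β}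

/-- Uniform exponential decay on a closed strip. -/
def qdDecay (f : ℂ → ℂ) (α β : ℝ) : Prop :=
  ∃ C d T : ℝ, 0 < d ∧ ∀ w : ℂ, α ≤ w.im → w.im ≤ β → T ≤ |w.re| →
    ‖f w‖ ≤ C * Real.exp (-d * |w.re|)

lemma qd_integrable_of_bound {φ : ℝ → ℂ} (hφ : Continuous φ) {C d T : ℝ} (hd : 0 < d)
    (h : ∀ t : ℝ, T ≤ |t| → ‖φ t‖ ≤ C * Real.exp (-d * |t|)) : Integrable φ := by
  -- bounded on the compact part
  obtain ⟨M, hM⟩ := (isCompact_Icc (a := -|T|) (b := |T|)).exists_bound_of_continuousOn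
    hφ.continuousOn
  have hM0 : 0 ≤ |M| := abs_nonneg _
  have hintg := (qd_integrable_exp_abs hd).const_mul (|C| + |M| * Real.exp (d * |T|))
  refine hintg.mono' hφ.aestronglyMeasurable (Eventually.of_forall fun t => ?_)
  rcases le_total T |t| with ht | ht
  · refine (h t ht).trans ?_
    have h1 : C ≤ |C| := le_abs_self C
    have h2 : 0 ≤ |M| * Real.exp (d * |T|) := by positivity
    gcongr
    linarith
  · have hmem : t ∈ Set.Icc (-|T|) |T| := by
      rw [Set.mem_Icc, ← abs_le]; exact ht.trans (le_abs_self T)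
    have h1 : ‖φ t‖ ≤ |M| := (hM t hmem).trans (le_abs_self M)
    have h3 : |t| ≤ |T| := ht.trans (le_abs_self T)
    calc ‖φ t‖ ≤ |M| * 1 := by simpa using h1
      _ ≤ |M| * Real.exp (d * |T| + -d * |t|) := by
          gcongr
          apply Real.one_le_exp
          nlinarith
      _ = 0 + |M| * Real.exp (d * |T|) * Real.exp (-d * |t|) := by rw [Real.exp_add]; ring
      _ ≤ |C| * Real.exp (-d * |t|) + |M| * Real.exp (d * |T|) * Real.exp (-d * |t|) := by
          gcongr; positivity
      _ = _ := by ring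

lemma qdDecay.integrable {f : ℂ → ℂ} {α β : ℝ} (h : qdDecay f α β) (s : ℝ) (h1 : α ≤ s)
    (h2 : s ≤ β) (hc : Continuous fun t : ℝ => f (t + s * Complex.I)) :
    Integrable fun t : ℝ => f (t + s * Complex.I) := by
  obtain ⟨C, d, T, hd, hb⟩ := h
  refine qd_integrable_of_bound hc (C := C) (T := T) hd fun t ht => ?_
  have := hb (t + s * Complex.I) (by simpa using h1) (by simpa using h2) (by simpa using ht)
  simpa using this

lemma qdDecay.small {f : ℂ → ℂ} {α β : ℝ} (h : qdDecay f α β) (δ : ℝ) (hδ : 0 < δ) :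
    ∃ T : ℝ, ∀ w : ℂ, α ≤ w.im → w.im ≤ β → T ≤ |w.re| → ‖f w‖ ≤ δ := by
  obtain ⟨C, d, T, hd, hb⟩ := h
  have ht : Tendsto (fun x : ℝ => C * Real.exp (-(d * x))) atTop (𝓝 (C * 0)) :=
    (Real.tendsto_exp_neg_atTop_nhds_zero.comp (tendsto_id.const_mul_atTop hd)).const_mul C
  rw [mul_zero] at ht
  obtain ⟨T', hT'⟩ := eventually_atTop.1 (ht.eventually (gt_mem_nhds hδ))
  refine ⟨max T T', fun w h1 h2 h3 => ?_⟩
  refine (hb w h1 h2 ((le_max_left _ _).trans h3)).trans ?_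
  have := hT' |w.re| ((le_max_right _ _).trans h3)
  simpa using this.le

lemma qd_contour_tendsto {g : ℂ → ℂ} {α β : ℝ} (hαβ : α ≤ β)
    (hg : DifferentiableOn ℂ g (qdStrip α β))
    (hdec : ∀ δ : ℝ, 0 < δ → ∃ T : ℝ, ∀ w : ℂ, α ≤ w.im → w.im ≤ β → T ≤ |w.re| → ‖g w‖ ≤ δ) :
    Tendsto (fun T : ℝ => (∫ t in (-T)..T, g (t + α * Complex.I)) -
      ∫ t in (-T)..T, g (t + β * Complex.I)) atTop (𝓝 0) := by
  rw [Metric.tendsto_atTop]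
  intro e he
  obtain ⟨T, hT⟩ := hdec (e / (2 * (β - α + 1)) / 2) (by
    have : 0 < β - α + 1 := by linarith
    positivity)
  refine ⟨|T|, fun S hS => ?_⟩
  have key := Complex.integral_boundary_rect_eq_zero_of_differentiableOn g
    (⟨-S, α⟩ : ℂ) (⟨S, β⟩ : ℂ) (hg.mono (by
      intro w hw
      simp only [Complex.mem_reProdIm, Set.uIcc_of_le hαβ] at hw
      exact ⟨hw.2.1, hw.2.2⟩))
  simp only at key
  have hS0 : T ≤ |S| := (le_abs_self T).trans (hS.le.trans (le_abs_self S))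
  have b1 : ‖∫ y in α..β, g ((S:ℝ) + y * Complex.I)‖ ≤
      (e / (2 * (β - α + 1)) / 2) * |β - α| := by
    apply intervalIntegral.norm_integral_le_of_norm_le_const
    intro y hy
    rw [Set.uIoc_of_le hαβ] at hy
    apply hT
    · simpa using hy.1.le
    · simpa using hy.2
    · simpa using hS0
  have b2 : ‖∫ y in α..β, g ((-S:ℝ) + y * Complex.I)‖ ≤
      (e / (2 * (β - α + 1)) / 2) * |β - α| := by
    apply intervalIntegral.norm_integral_le_of_norm_le_const
    intro y hy
    rw [Set.uIoc_of_le hαβ] at hy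
    apply hT
    · simpa using hy.1.le
    · simpa using hy.2
    · simpa using hS0
  have e1 : (∫ t in (-S)..S, g (t + α * Complex.I)) - ∫ t in (-S)..S, g (t + β * Complex.I) =
      Complex.I • (∫ y in α..β, g ((-S:ℝ) + y * Complex.I)) -
      Complex.I • (∫ y in α..β, g ((S:ℝ) + y * Complex.I)) := by
    linear_combination key
  rw [dist_zero_right, e1]
  have hpos : 0 < β - α + 1 := by linarith
  calc _ ≤ ‖Complex.I • (∫ y in α..β, g ((-S:ℝ) + y * Complex.I))‖ +
      ‖Complex.I • (∫ y in α..β, g ((S:ℝ) + y * Complex.I))‖ := norm_sub_le _ _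
    _ ≤ 2 * ((e / (2 * (β - α + 1)) / 2) * |β - α|) := by
      rw [norm_smul, norm_smul]; simp only [Complex.norm_I, one_mul]; linarith
    _ = e / 2 * ((β - α) / (β - α + 1)) := by
      rw [abs_of_nonneg (by linarith)]; field_simp
    _ < e := by
      have : (β - α) / (β - α + 1) ≤ 1 := by rw [div_le_one hpos]; linarith
      nlinarith

/-- Contour shift without poles. -/
lemma qd_contour_shift {g : ℂ → ℂ} {α β : ℝ} (hαβ : α ≤ β)
    (hg : DifferentiableOn ℂ g (qdStrip α β)) (hdec : qdDecay g α β) :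
    ∫ t : ℝ, g (t + α * Complex.I) = ∫ t : ℝ, g (t + β * Complex.I) := by
  have hcont : ∀ s : ℝ, α ≤ s → s ≤ β → Continuous fun t : ℝ => g (t + s * Complex.I) := by
    intro s h1 h2
    refine hg.continuousOn.comp_continuous (by fun_prop) fun t => ?_
    constructor <;> simpa
  have hi1 := hdec.integrable α le_rfl hαβ (hcont α le_rfl hαβ)
  have hi2 := hdec.integrable β hαβ le_rfl (hcont β hαβ le_rfl)
  have t1 := intervalIntegral_tendsto_integral hi1 tendsto_neg_atTop_atBot tendsto_id
  have t2 := intervalIntegral_tendsto_integral hi2 tendsto_neg_atTop_atBot tendsto_id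
  have := tendsto_nhds_unique (t1.sub t2) (qd_contour_tendsto hαβ hg hdec.small)
  exact sub_eq_zero.1 this

lemma qd_line_ne {a : ℝ} (ha : a ≠ 0) (t : ℝ) : ((t:ℂ) + a * Complex.I) ≠ 0 := by
  intro h
  have := congrArg Complex.im h
  simp at this
  exact ha this

/-- Principal value of `1/w` along a horizontal line. -/
lemma qd_pv_inv {a : ℝ} (ha : a ≠ 0) :
    Tendsto (fun T : ℝ => ∫ t in (-T)..T, ((t:ℂ) + a * Complex.I)⁻¹) atTop
      (𝓝 (-(Complex.I * π * SignType.sign a))) := by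
  have hpos : ∀ t : ℝ, 0 < t ^ 2 + a ^ 2 := fun t => by positivity
  have hsplit : ∀ t : ℝ, ((t:ℂ) + a * Complex.I)⁻¹ =
      ((t / (t ^ 2 + a ^ 2) : ℝ) : ℂ) - Complex.I * ((a⁻¹ * (1 + (t / a) ^ 2)⁻¹ : ℝ) : ℂ) := by
    intro t
    have h1 := qd_line_ne ha t
    have h2 : ((t:ℂ) ^ 2 + (a:ℂ) ^ 2) ≠ 0 := by exact_mod_cast (hpos t).ne'
    have h3 : (1 + (t / a) ^ 2)⁻¹ * a⁻¹ = a / (t ^ 2 + a ^ 2) := by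
      have := (hpos t).ne'
      have h4 : 1 + (t/a)^2 ≠ 0 := by positivity
      have h5 : (1 + (t/a)^2) * a ^2 = t^2 + a^2 := by field_simp; ring
      rw [← h5]; field_simp
    rw [mul_comm a⁻¹, h3]
    push_cast
    rw [inv_eq_one_div, div_eq_iff h1]
    field_simp
    ring_nf
    simp
  have hc1 : Continuous fun t : ℝ => ((t / (t ^ 2 + a ^ 2) : ℝ) : ℂ) := by
    refine Complex.continuous_ofReal.comp ?_
    exact continuous_id.div (by fun_prop) fun t => (hpos t).ne'
  have hc2 : Continuous fun t : ℝ => ((a⁻¹ * (1 + (t / a) ^ 2)⁻¹ : ℝ) : ℂ) := by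
    refine Complex.continuous_ofReal.comp ?_
    refine continuous_const.mul (Continuous.inv₀ (by fun_prop) fun t => by positivity)
  have hodd : ∀ T : ℝ, ∫ t in (-T)..T, ((t / (t ^ 2 + a ^ 2) : ℝ) : ℂ) = 0 := by
    intro T
    have := intervalIntegral.integral_comp_neg (a := -T) (b := T)
      (fun t : ℝ => ((t / (t ^ 2 + a ^ 2) : ℝ) : ℂ))
    simp only [neg_neg] at this
    have h2 : ∀ t : ℝ, ((-t / ((-t) ^ 2 + a ^ 2) : ℝ) : ℂ) = -((t / (t ^ 2 + a ^ 2) : ℝ) : ℂ) := by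
      intro t; push_cast; ring
    simp only [h2, intervalIntegral.integral_neg] at this
    exact self_eq_neg.1 this.symm
  have hi : Integrable fun t : ℝ => ((a⁻¹ * (1 + (t / a) ^ 2)⁻¹ : ℝ) : ℂ) :=
    ((integrable_inv_one_add_sq.comp_div ha).const_mul a⁻¹).ofReal
  have hval : ∫ t : ℝ, ((a⁻¹ * (1 + (t / a) ^ 2)⁻¹ : ℝ) : ℂ) = π * SignType.sign a := by
    rw [integral_complex_ofReal, integral_const_mul,
      Measure.integral_comp_div (fun t : ℝ => (1 + t ^ 2)⁻¹) a, integral_univ_inv_one_add_sq]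
    rcases lt_or_gt_of_ne ha with h | h
    · simp [sign_neg h, abs_of_neg h]
      have h' : (a:ℂ) ≠ 0 := by exact_mod_cast ha
      field_simp
    · simp [sign_pos h, abs_of_pos h]
      have h' : (a:ℂ) ≠ 0 := by exact_mod_cast ha
      field_simp
  have hlim := (intervalIntegral_tendsto_integral hi tendsto_neg_atTop_atBot tendsto_id).const_mul
    (-Complex.I)
  rw [hval] at hlim
  have hfin : -Complex.I * (π * SignType.sign a) = -(Complex.I * π * SignType.sign a) := by ring
  rw [hfin] at hlim
  refine hlim.congr fun T => ?_
  simp only [hsplit]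
  have hc3 : Continuous fun t : ℝ => Complex.I * ((a⁻¹ * (1 + (t / a) ^ 2)⁻¹ : ℝ) : ℂ) :=
    continuous_const.mul hc2
  rw [intervalIntegral.integral_sub (hc1.intervalIntegrable _ _)
    (hc3.intervalIntegrable _ _), hodd,
    intervalIntegral.integral_const_mul]
  simp

lemma qd_norm_inv_le {w : ℂ} {T : ℝ} (hT : 0 < T) (h : T ≤ |w.re|) : ‖w⁻¹‖ ≤ T⁻¹ := by
  rw [norm_inv]
  exact inv_anti₀ hT (h.trans (Complex.abs_re_le_norm w))

lemma qd_tendsto_inv_line (a : ℝ) (e : ℝ → ℝ) (he : ∀ T, |e T| = |T|) :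
    Tendsto (fun T : ℝ => ((e T : ℂ) + a * Complex.I)⁻¹) atTop (𝓝 0) := by
  rw [tendsto_zero_iff_norm_tendsto_zero]
  refine squeeze_zero' (Eventually.of_forall fun T => norm_nonneg _) ?_ tendsto_inv_atTop_zero
  filter_upwards [eventually_gt_atTop 0] with T hT
  refine qd_norm_inv_le hT ?_
  simp [he, abs_of_pos hT]

lemma qd_pv_inv_sq {a : ℝ} (ha : a ≠ 0) :
    Tendsto (fun T : ℝ => ∫ t in (-T)..T, (((t:ℂ) + a * Complex.I) ^ 2)⁻¹) atTop (𝓝 0) := by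
  have hF : ∀ T : ℝ, ∫ t in (-T)..T, (((t:ℂ) + a * Complex.I) ^ 2)⁻¹ =
      -((T:ℂ) + a * Complex.I)⁻¹ - -(((-T:ℝ):ℂ) + a * Complex.I)⁻¹ := by
    intro T
    apply intervalIntegral.integral_eq_sub_of_hasDerivAt
      (f := fun t : ℝ => -((t:ℂ) + a * Complex.I)⁻¹)
    · intro t _
      have h1 : HasDerivAt (fun t : ℝ => (t:ℂ) + a * Complex.I) 1 t :=
        (Complex.ofRealCLM.hasDerivAt (x := t)).add_const _
      have h2 : HasDerivAt (fun t : ℝ => -((t:ℂ) + a * Complex.I)⁻¹)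
          (-(-1 / ((t:ℂ) + a * Complex.I) ^ 2)) t := ((h1.inv (qd_line_ne ha t)).neg)
      have h3 : (((t:ℂ) + a * Complex.I) ^ 2)⁻¹ = -(-1 / ((t:ℂ) + a * Complex.I) ^ 2) := by
        rw [neg_div, neg_neg, one_div]
      rw [h3]
      exact h2
    · refine Continuous.intervalIntegrable ?_ _ _
      exact Continuous.inv₀ (by fun_prop) fun t => pow_ne_zero _ (qd_line_ne ha t)
  simp only [hF]
  have := (qd_tendsto_inv_line a (fun T => T) (fun _ => rfl)).neg.sub
    (qd_tendsto_inv_line a (fun T => -T) (fun _ => abs_neg _)).neg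
  simpa using this

lemma qd_pv_inv_cube {a : ℝ} (ha : a ≠ 0) :
    Tendsto (fun T : ℝ => ∫ t in (-T)..T, (((t:ℂ) + a * Complex.I) ^ 3)⁻¹) atTop (𝓝 0) := by
  have hF : ∀ T : ℝ, ∫ t in (-T)..T, (((t:ℂ) + a * Complex.I) ^ 3)⁻¹ =
      -(((T:ℂ) + a * Complex.I)⁻¹ ^ 2) / 2 - -((((-T:ℝ):ℂ) + a * Complex.I)⁻¹ ^ 2) / 2 := by
    intro T
    apply intervalIntegral.integral_eq_sub_of_hasDerivAt
      (f := fun t : ℝ => -(((t:ℂ) + a * Complex.I)⁻¹ ^ 2) / 2)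
    · intro t _
      have h1 : HasDerivAt (fun t : ℝ => (t:ℂ) + a * Complex.I) 1 t :=
        (Complex.ofRealCLM.hasDerivAt (x := t)).add_const _
      have h0 := qd_line_ne ha t
      have h2 := (((h1.inv (qd_line_ne ha t)).pow 2).neg).div_const 2
      have h3 : (((t:ℂ) + a * Complex.I) ^ 3)⁻¹ = -((2:ℕ) * ((t:ℂ) + a * Complex.I)⁻¹ ^ (2-1) *
          (-1 / ((t:ℂ) + a * Complex.I) ^ 2)) / 2 := by
        norm_num
        field_simp
      rw [h3]
      exact h2
    · refine Continuous.intervalIntegrable ?_ _ _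
      exact Continuous.inv₀ (by fun_prop) fun t => pow_ne_zero _ (qd_line_ne ha t)
  simp only [hF]
  have := (((qd_tendsto_inv_line a (fun T => T) (fun _ => rfl)).pow 2).neg.div_const 2).sub
    (((qd_tendsto_inv_line a (fun T => -T) (fun _ => abs_neg _)).pow 2).neg.div_const 2)
  simpa using this

/-- Contour shift across a pole at `0` of order at most three. -/
lemma qd_contour_pole {f g : ℂ → ℂ} {c1 c2 c3 : ℂ} {α β : ℝ} (hα : α < 0) (hβ : 0 < β)
    (hg : DifferentiableOn ℂ g (qdStrip α β))
    (hfg : ∀ w ∈ qdStrip α β, w ≠ 0 →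
      f w = g w + c1 * w⁻¹ + c2 * (w ^ 2)⁻¹ + c3 * (w ^ 3)⁻¹)
    (hdec : qdDecay f α β) :
    (∫ t : ℝ, f (t + α * Complex.I)) - ∫ t : ℝ, f (t + β * Complex.I) =
      2 * π * Complex.I * c1 := by
  have hαβ : α ≤ β := by linarith
  have hline : ∀ s : ℝ, α ≤ s → s ≤ β → s ≠ 0 → ∀ t : ℝ, f (t + s * Complex.I) =
      g (t + s * Complex.I) + c1 * ((t:ℂ) + s * Complex.I)⁻¹ +
      c2 * (((t:ℂ) + s * Complex.I) ^ 2)⁻¹ + c3 * (((t:ℂ) + s * Complex.I) ^ 3)⁻¹ := by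
    intro s h1 h2 h3 t
    apply hfg _ _ (qd_line_ne h3 t)
    constructor <;> simpa
  have hgc : ∀ s : ℝ, α ≤ s → s ≤ β → Continuous fun t : ℝ => g (t + s * Complex.I) := by
    intro s h1 h2
    refine hg.continuousOn.comp_continuous (by fun_prop) fun t => ?_
    constructor <;> simpa
  have hpc : ∀ s : ℝ, s ≠ 0 → ∀ n : ℕ, Continuous fun t : ℝ => (((t:ℂ) + s * Complex.I) ^ n)⁻¹ :=
    fun s hs n => Continuous.inv₀ (by fun_prop) fun t => pow_ne_zero _ (qd_line_ne hs t)
  have hpc1 : ∀ s : ℝ, s ≠ 0 → Continuous fun t : ℝ => ((t:ℂ) + s * Complex.I)⁻¹ :=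
    fun s hs => Continuous.inv₀ (by fun_prop) fun t => (qd_line_ne hs t)
  have hcont : ∀ s : ℝ, α ≤ s → s ≤ β → s ≠ 0 →
      Continuous fun t : ℝ => f (t + s * Complex.I) := by
    intro s h1 h2 h3
    simp only [hline s h1 h2 h3]
    exact (((hgc s h1 h2).add (continuous_const.mul (hpc1 s h3))).add
      (continuous_const.mul (hpc s h3 2))).add (continuous_const.mul (hpc s h3 3))
  have hi1 := hdec.integrable α le_rfl hαβ (hcont α le_rfl hαβ hα.ne)
  have hi2 := hdec.integrable β hαβ le_rfl (hcont β hαβ le_rfl hβ.ne')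
  have hintg : ∀ s : ℝ, α ≤ s → s ≤ β → s ≠ 0 → ∀ T : ℝ,
      ∫ t in (-T)..T, f (t + s * Complex.I) = (∫ t in (-T)..T, g (t + s * Complex.I)) +
        c1 * (∫ t in (-T)..T, ((t:ℂ) + s * Complex.I)⁻¹) +
        c2 * (∫ t in (-T)..T, (((t:ℂ) + s * Complex.I) ^ 2)⁻¹) +
        c3 * (∫ t in (-T)..T, (((t:ℂ) + s * Complex.I) ^ 3)⁻¹) := by
    intro s h1 h2 h3 T
    simp only [hline s h1 h2 h3]
    have k0 := (hgc s h1 h2).intervalIntegrable (μ := volume) (-T) T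
    have k1 : IntervalIntegrable (fun t : ℝ => c1 * ((t:ℂ) + s * Complex.I)⁻¹) volume (-T) T :=
      ((continuous_const (y := c1)).mul (hpc1 s h3)).intervalIntegrable (-T) T
    have k2 : IntervalIntegrable (fun t : ℝ => c2 * (((t:ℂ) + s * Complex.I) ^ 2)⁻¹) volume (-T) T :=
      ((continuous_const (y := c2)).mul (hpc s h3 2)).intervalIntegrable (-T) T
    have k3 : IntervalIntegrable (fun t : ℝ => c3 * (((t:ℂ) + s * Complex.I) ^ 3)⁻¹) volume (-T) T :=
      ((continuous_const (y := c3)).mul (hpc s h3 3)).intervalIntegrable (-T) T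
    rw [intervalIntegral.integral_add ((k0.add k1).add k2) k3,
      intervalIntegral.integral_add (k0.add k1) k2, intervalIntegral.integral_add k0 k1]
    simp only [intervalIntegral.integral_const_mul]
  -- decay of `g`
  have hgdec : ∀ δ : ℝ, 0 < δ → ∃ T : ℝ, ∀ w : ℂ, α ≤ w.im → w.im ≤ β → T ≤ |w.re| →
      ‖g w‖ ≤ δ := by
    intro δ hδ
    obtain ⟨T, hT⟩ := hdec.small (δ / 2) (by positivity)
    set M : ℝ := ‖c1‖ + ‖c2‖ + ‖c3‖ + 1 with hM
    have hMpos : 0 < M := by positivity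
    refine ⟨max (max T 1) (2 * M / δ), fun w h1 h2 h3 => ?_⟩
    have hT1 : 1 ≤ |w.re| := (le_max_right _ _).trans ((le_max_left _ _).trans h3)
    have hTT : T ≤ |w.re| := (le_max_left _ _).trans ((le_max_left _ _).trans h3)
    have hT3 : 2 * M / δ ≤ |w.re| := (le_max_right _ _).trans h3
    have hw0 : w ≠ 0 := by
      rintro rfl
      simp at hT1
      linarith
    have hpos : 0 < 2 * M / δ := by positivity
    have hinv := qd_norm_inv_le hpos hT3
    have hinv1 := qd_norm_inv_le one_pos hT1
    have hn0 : 0 ≤ ‖w⁻¹‖ := norm_nonneg _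
    rw [inv_one] at hinv1
    have hsq : ‖(w ^ 2)⁻¹‖ ≤ ‖w⁻¹‖ := by
      rw [← inv_pow, norm_pow]; nlinarith
    have hcu : ‖(w ^ 3)⁻¹‖ ≤ ‖w⁻¹‖ := by
      rw [← inv_pow, norm_pow]
      exact pow_le_of_le_one hn0 hinv1 (by norm_num)
    have hgw : g w = f w - (c1 * w⁻¹ + c2 * (w ^ 2)⁻¹ + c3 * (w ^ 3)⁻¹) := by
      rw [hfg w ⟨h1, h2⟩ hw0]; ring
    rw [hgw]
    have hb : ‖c1 * w⁻¹ + c2 * (w ^ 2)⁻¹ + c3 * (w ^ 3)⁻¹‖ ≤ M * ‖w⁻¹‖ := by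
      calc _ ≤ ‖c1 * w⁻¹‖ + ‖c2 * (w ^ 2)⁻¹‖ + ‖c3 * (w ^ 3)⁻¹‖ := norm_add₃_le
        _ ≤ ‖c1‖ * ‖w⁻¹‖ + ‖c2‖ * ‖w⁻¹‖ + ‖c3‖ * ‖w⁻¹‖ := by
          simp only [norm_mul]; gcongr
        _ ≤ M * ‖w⁻¹‖ := by rw [hM]; nlinarith
    have hb2 : M * ‖w⁻¹‖ ≤ δ / 2 := by
      calc M * ‖w⁻¹‖ ≤ M * (2 * M / δ)⁻¹ := by gcongr
        _ = δ / 2 := by field_simp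
    calc _ ≤ ‖f w‖ + ‖c1 * w⁻¹ + c2 * (w ^ 2)⁻¹ + c3 * (w ^ 3)⁻¹‖ := norm_sub_le _ _
      _ ≤ δ / 2 + δ / 2 := add_le_add (hT w h1 h2 hTT) (hb.trans hb2)
      _ = δ := by ring
  have t1 := intervalIntegral_tendsto_integral hi1 tendsto_neg_atTop_atBot tendsto_id
  have t2 := intervalIntegral_tendsto_integral hi2 tendsto_neg_atTop_atBot tendsto_id
  have t3 := qd_contour_tendsto hαβ hg hgdec
  have t4 := (((t3.add (((qd_pv_inv hα.ne).sub (qd_pv_inv hβ.ne')).const_mul c1)).add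
    (((qd_pv_inv_sq hα.ne).sub (qd_pv_inv_sq hβ.ne')).const_mul c2)).add
    (((qd_pv_inv_cube hα.ne).sub (qd_pv_inv_cube hβ.ne')).const_mul c3))
  have t5 := (t1.sub t2)
  have := tendsto_nhds_unique t5 (t4.congr fun T => by
    simp only [id]
    rw [hintg α le_rfl hαβ hα.ne, hintg β hαβ le_rfl hβ.ne']
    ring)
  rw [this]
  simp [sign_neg hα, sign_pos hβ]
  ring

lemma qd_dslope_step (f : ℂ → ℂ) (hf : Differentiable ℂ f) :
    Differentiable ℂ (dslope f 0) ∧ ∀ w, f w = f 0 + w * dslope f 0 w := by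
  constructor
  · rw [← differentiableOn_univ] at hf ⊢
    exact (Complex.differentiableOn_dslope Filter.univ_mem).2 hf
  · intro w
    have := sub_smul_dslope f 0 w
    simp only [sub_zero, smul_eq_mul] at this
    rw [this]; ring

/-- Taylor expansion of `exp` with entire remainder. -/
lemma qd_exp_taylor : ∃ E : ℂ → ℂ, Differentiable ℂ E ∧
    ∀ w, Complex.exp w = 1 + w + w ^ 2 / 2 + w ^ 3 / 6 + w ^ 4 * E w := by
  have hps := (Complex.differentiable_exp.analyticAt 0).hasFPowerSeriesAt
  have hval : ∀ n : ℕ, ((Function.swap dslope (0:ℂ))^[n] Complex.exp) 0 = 1 / (n.factorial : ℂ) := by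
    intro n
    have h := hps.has_fpower_series_iterate_dslope_fslope n
    have h2 := h.coeff_zero 1
    have h3 := FormalMultilinearSeries.coeff_iterate_fslope (p := (FormalMultilinearSeries.ofScalars ℂ
      (fun n ↦ iteratedDeriv n Complex.exp 0 / n.factorial))) n 0
    rw [FormalMultilinearSeries.coeff] at h3
    rw [← h2]
    refine h3.trans ?_
    simp [FormalMultilinearSeries.coeff_ofScalars, iteratedDeriv_eq_iterate]
  obtain ⟨d1, s1⟩ := qd_dslope_step Complex.exp Complex.differentiable_exp
  obtain ⟨d2, s2⟩ := qd_dslope_step _ d1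
  obtain ⟨d3, s3⟩ := qd_dslope_step _ d2
  obtain ⟨d4, s4⟩ := qd_dslope_step _ d3
  refine ⟨_, d4, fun w => ?_⟩
  have v1 : dslope Complex.exp 0 0 = 1 := by simp
  have v2 : dslope (dslope Complex.exp 0) 0 0 = 1 / 2 := by simpa using hval 2
  have v3 : dslope (dslope (dslope Complex.exp 0) 0) 0 0 = 1 / 6 := by
    have := hval 3
    simp [Nat.factorial] at this
    simpa using this
  rw [s1 w, s2 w, s3 w, s4 w, v1, v2, v3, Complex.exp_zero]
  ring

lemma qd_sinh_normSq (w : ℂ) :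
    ‖Complex.sinh w‖ ^ 2 = Real.sinh w.re ^ 2 + Real.sin w.im ^ 2 := by
  have h : Complex.sinh w = ((Real.sinh w.re * Real.cos w.im : ℝ) : ℂ) +
      ((Real.cosh w.re * Real.sin w.im : ℝ) : ℂ) * Complex.I := by
    conv_lhs => rw [← Complex.re_add_im w]
    rw [Complex.sinh_add, Complex.cosh_mul_I, Complex.sinh_mul_I]
    push_cast; ring
  rw [h, ← Complex.normSq_eq_norm_sq, Complex.normSq_add_mul_I]
  have h1 := Real.cosh_sq w.re
  have h2 := Real.sin_sq_add_cos_sq w.im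
  rw [mul_pow, mul_pow, h1]
  linear_combination (Real.sinh w.re ^ 2) * h2

lemma qd_sinh_lower1 (w : ℂ) : |Real.sin w.im| * Real.cosh w.re ≤ ‖Complex.sinh w‖ := by
  apply le_of_sq_le_sq _ (norm_nonneg _)
  rw [qd_sinh_normSq, mul_pow, sq_abs, Real.cosh_sq]
  have := Real.sin_sq_le_one w.im
  nlinarith [sq_nonneg (Real.sinh w.re)]

lemma qd_sinh_lower2 (w : ℂ) : |Real.sinh w.re| ≤ ‖Complex.sinh w‖ := by
  apply le_of_sq_le_sq _ (norm_nonneg _)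
  rw [qd_sinh_normSq, sq_abs]
  nlinarith [sq_nonneg (Real.sin w.im)]

lemma qd_cosh_lower (x : ℝ) : Real.exp |x| / 2 ≤ Real.cosh x := by
  rw [← Real.cosh_abs, Real.cosh_eq]
  have := Real.exp_pos (-|x|)
  linarith

lemma qd_sinh_lower_exp {w : ℂ} (h : 1 ≤ |w.re|) :
    Real.exp |w.re| / 4 ≤ ‖Complex.sinh w‖ := by
  refine le_trans ?_ (qd_sinh_lower2 w)
  rw [Real.abs_sinh, Real.sinh_eq]
  have h1 : Real.exp (-|w.re|) ≤ 1 := by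
    rw [Real.exp_le_one_iff]; linarith
  have h2 : |w.re| + 1 ≤ Real.exp |w.re| := Real.add_one_le_exp _
  linarith

lemma qd_sinh_lower_line {w : ℂ} :
    |Real.sin w.im| / 2 * Real.exp |w.re| ≤ ‖Complex.sinh w‖ := by
  refine le_trans ?_ (qd_sinh_lower1 w)
  have := qd_cosh_lower w.re
  have h := abs_nonneg (Real.sin w.im)
  nlinarith

lemma qd_sinh_ne {w : ℂ} (h0 : w ≠ 0) (h1 : |w.im| < π) : Complex.sinh w ≠ 0 := by
  intro h
  have hs := qd_sinh_normSq w
  rw [h, norm_zero] at hs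
  have a1 : Real.sinh w.re = 0 := by nlinarith [sq_nonneg (Real.sinh w.re), sq_nonneg (Real.sin w.im)]
  have a2 : Real.sin w.im = 0 := by nlinarith [sq_nonneg (Real.sinh w.re), sq_nonneg (Real.sin w.im)]
  rw [Real.sinh_eq_zero] at a1
  rw [abs_lt] at h1
  rw [Real.sin_eq_zero_iff_of_lt_of_lt h1.1 h1.2] at a2
  exact h0 (Complex.ext a1 a2)

/-- `sinh w = w * P w` with a Taylor expansion of `P`. -/
lemma qd_sinh_taylor : ∃ P ρ : ℂ → ℂ, Differentiable ℂ P ∧ Differentiable ℂ ρ ∧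
    (∀ w, P w = 1 + w ^ 2 / 6 + w ^ 3 * ρ w) ∧ (∀ w, Complex.sinh w = w * P w) ∧
    ∀ w : ℂ, |w.im| < π → P w ≠ 0 := by
  obtain ⟨E, hE, hexp⟩ := qd_exp_taylor
  have hρ : Differentiable ℂ fun w => (E w - E (-w)) / 2 :=
    (hE.sub (hE.comp differentiable_neg)).div_const 2
  refine ⟨fun w => 1 + w ^ 2 / 6 + w ^ 3 * ((E w - E (-w)) / 2), _, ?_, hρ, fun w => rfl, ?_, ?_⟩
  · exact ((differentiable_const _).add ((differentiable_id.pow 2).div_const _)).add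
      ((differentiable_id.pow 3).mul hρ)
  · intro w
    rw [Complex.sinh, hexp w, hexp (-w)]
    ring
  · intro w hw h
    by_cases h0 : w = 0
    · subst h0; simp at h
    · apply qd_sinh_ne h0 hw
      rw [Complex.sinh, hexp w, hexp (-w)]
      simp only at h
      linear_combination w * h

/-! Fourier-Laplace transforms -/

lemma qd_norm_kernel (z : ℂ) (s t : ℝ) :
    ‖Complex.exp (-Complex.I * z * (t + s * Complex.I))‖ = Real.exp (t * z.im + s * z.re) := by
  rw [Complex.norm_exp]
  congr 1
  simp
  ring

lemma qd_FL_bound {φ : ℝ → ℂ} {C p q s : ℝ}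
    (hp : ∀ t, 0 ≤ t → ‖φ t‖ ≤ C * Real.exp (-p * t))
    (hq : ∀ t, t ≤ 0 → ‖φ t‖ ≤ C * Real.exp (q * t)) {z : ℂ} {d : ℝ}
    (h1 : d ≤ q + z.im) (h2 : d ≤ p - z.im) (t : ℝ) :
    ‖Complex.exp (-Complex.I * z * (t + s * Complex.I)) * φ t‖ ≤
      C * Real.exp (s * z.re) * Real.exp (-d * |t|) := by
  have hC : 0 ≤ C := by
    have := (norm_nonneg _).trans (hp 0 le_rfl)
    simpa using this
  rw [norm_mul, qd_norm_kernel, Real.exp_add]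
  rcases le_total 0 t with ht | ht
  · rw [abs_of_nonneg ht]
    calc _ ≤ Real.exp (t * z.im) * Real.exp (s * z.re) * (C * Real.exp (-p * t)) := by
          gcongr; exact hp t ht
      _ = C * Real.exp (s * z.re) * Real.exp (t * z.im + -p * t) := by rw [Real.exp_add]; ring
      _ ≤ _ := by gcongr; nlinarith
  · rw [abs_of_nonpos ht]
    calc _ ≤ Real.exp (t * z.im) * Real.exp (s * z.re) * (C * Real.exp (q * t)) := by
          gcongr; exact hq t ht
      _ = C * Real.exp (s * z.re) * Real.exp (t * z.im + q * t) := by rw [Real.exp_add]; ring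
      _ ≤ _ := by gcongr; nlinarith

lemma qd_FL_integrable {φ : ℝ → ℂ} (hφ : Continuous φ) {C p q : ℝ} (s : ℝ)
    (hp : ∀ t, 0 ≤ t → ‖φ t‖ ≤ C * Real.exp (-p * t))
    (hq : ∀ t, t ≤ 0 → ‖φ t‖ ≤ C * Real.exp (q * t)) {z : ℂ} (h1 : -q < z.im) (h2 : z.im < p) :
    Integrable fun t : ℝ => Complex.exp (-Complex.I * z * (t + s * Complex.I)) * φ t := by
  have hd : 0 < min (q + z.im) (p - z.im) := lt_min (by linarith) (by linarith)
  exact qd_integrable_of_bound (by fun_prop) hd (T := 0)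
    (fun t _ => qd_FL_bound hp hq (min_le_left _ _) (min_le_right _ _) t)

lemma qd_FL_hasDerivAt {φ : ℝ → ℂ} (hφ : Continuous φ) {C p q : ℝ} (s : ℝ)
    (hp : ∀ t, 0 ≤ t → ‖φ t‖ ≤ C * Real.exp (-p * t))
    (hq : ∀ t, t ≤ 0 → ‖φ t‖ ≤ C * Real.exp (q * t)) {z : ℂ} (h1 : -q < z.im) (h2 : z.im < p) :
    HasDerivAt (fun z : ℂ => ∫ t : ℝ, Complex.exp (-Complex.I * z * (t + s * Complex.I)) * φ t)
      (∫ t : ℝ, -Complex.I * (t + s * Complex.I) *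
        (Complex.exp (-Complex.I * z * (t + s * Complex.I)) * φ t)) z := by
  have hC : 0 ≤ C := by
    have := (norm_nonneg _).trans (hp 0 le_rfl)
    simpa using this
  set d := min (q + z.im) (p - z.im) with hd_def
  have hd : 0 < d := lt_min (by linarith) (by linarith)
  have hd1 : d ≤ q + z.im := min_le_left _ _
  have hd2 : d ≤ p - z.im := min_le_right _ _
  refine (hasDerivAt_integral_of_dominated_loc_of_deriv_le (s := Metric.ball z (d / 2))
    (bound := fun t => (4 / d + |s|) * (C * Real.exp (|s| * (|z.re| + d))) *
      Real.exp (-(d / 4) * |t|))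
    (F' := fun z t => -Complex.I * (t + s * Complex.I) *
        (Complex.exp (-Complex.I * z * (t + s * Complex.I)) * φ t))
    (Metric.ball_mem_nhds z (by positivity)) ?_ (qd_FL_integrable hφ s hp hq h1 h2) ?_ ?_ ?_ ?_).2
  · refine Eventually.of_forall fun z' => Continuous.aestronglyMeasurable (by fun_prop)
  · exact Continuous.aestronglyMeasurable (by fun_prop)
  · refine Eventually.of_forall fun t z' hz' => ?_
    rw [Metric.mem_ball, dist_eq_norm] at hz'
    have him : |z'.im - z.im| < d / 2 := by
      simpa using (Complex.abs_im_le_norm (z' - z)).trans_lt hz'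
    have hre : |z'.re - z.re| < d / 2 := by
      simpa using (Complex.abs_re_le_norm (z' - z)).trans_lt hz'
    rw [abs_lt] at him
    have hb := qd_FL_bound (s := s) hp hq (z := z') (d := d / 2) (by linarith) (by linarith) t
    have hre2 : s * z'.re ≤ |s| * (|z.re| + d) := by
      calc s * z'.re ≤ |s| * |z'.re| := by rw [← abs_mul]; exact le_abs_self _
        _ ≤ _ := by
          gcongr
          have : |z'.re| ≤ |z'.re - z.re| + |z.re| := by
            simpa using abs_add_le (z'.re - z.re) z.re
          linarith
    have hn : ‖-Complex.I * ((t:ℂ) + s * Complex.I)‖ ≤ |t| + |s| := by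
      rw [norm_mul, norm_neg, Complex.norm_I, one_mul]
      refine (norm_add_le _ _).trans ?_
      simp
    have ht : |t| + |s| ≤ (4 / d + |s|) * Real.exp (d / 4 * |t|) := by
      have e1 : d / 4 * |t| ≤ Real.exp (d / 4 * |t|) := by
        linarith [Real.add_one_le_exp (d / 4 * |t|)]
      have e2 : 1 ≤ Real.exp (d / 4 * |t|) := Real.one_le_exp (by positivity)
      have e3 : |t| = 4 / d * (d / 4 * |t|) := by field_simp
      have e4 : 4 / d * (d / 4 * |t|) ≤ 4 / d * Real.exp (d / 4 * |t|) := by gcongr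
      have e5 : |s| ≤ |s| * Real.exp (d / 4 * |t|) := le_mul_of_one_le_right (abs_nonneg _) e2
      linarith
    rw [norm_mul]
    calc _ ≤ ((4 / d + |s|) * Real.exp (d / 4 * |t|)) *
          (C * Real.exp (|s| * (|z.re| + d)) * Real.exp (-(d / 2) * |t|)) := by
          refine mul_le_mul (hn.trans ht) (hb.trans ?_) (norm_nonneg _) (by positivity)
          gcongr
      _ = (4 / d + |s|) * (C * Real.exp (|s| * (|z.re| + d))) *
          (Real.exp (d / 4 * |t|) * Real.exp (-(d / 2) * |t|)) := by ring
      _ = _ := by rw [← Real.exp_add]; congr 2; ring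
  · exact (qd_integrable_exp_abs (by positivity)).const_mul _
  · refine Eventually.of_forall fun t z' _ => ?_
    have e1 : HasDerivAt (fun z : ℂ => -Complex.I * z * (t + s * Complex.I))
        (-Complex.I * (t + s * Complex.I)) z' := by
      have := ((hasDerivAt_id z').const_mul (-Complex.I)).mul_const ((t:ℂ) + s * Complex.I)
      simpa using this
    have e2 := e1.cexp.mul_const (φ t)
    exact e2.congr_deriv (by ring)

lemma qd_norm_kernel' (z w : ℂ) :
    ‖Complex.exp (-Complex.I * z * w)‖ = Real.exp (w.re * z.im + w.im * z.re) := by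
  rw [Complex.norm_exp]
  congr 1
  simp
  ring

lemma qdDecay_kernel {k : ℂ → ℂ} {C p q T α β : ℝ}
    (hp : ∀ w ∈ qdStrip α β, T ≤ |w.re| → 0 ≤ w.re → ‖k w‖ ≤ C * Real.exp (-p * w.re))
    (hq : ∀ w ∈ qdStrip α β, T ≤ |w.re| → w.re ≤ 0 → ‖k w‖ ≤ C * Real.exp (q * w.re))
    {z : ℂ} (h1 : -q < z.im) (h2 : z.im < p) :
    qdDecay (fun w => Complex.exp (-Complex.I * z * w) * k w) α β := by
  have hd1 : min (q + z.im) (p - z.im) ≤ q + z.im := min_le_left _ _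
  have hd2 : min (q + z.im) (p - z.im) ≤ p - z.im := min_le_right _ _
  refine ⟨Real.exp ((|α| + |β|) * |z.re|) * |C|, min (q + z.im) (p - z.im), T,
    lt_min (by linarith) (by linarith), fun w hw1 hw2 hT => ?_⟩
  have him : w.im * z.re ≤ (|α| + |β|) * |z.re| := by
    calc w.im * z.re ≤ |w.im| * |z.re| := by rw [← abs_mul]; exact le_abs_self _
      _ ≤ _ := by
        gcongr
        rw [abs_le]
        constructor
        · linarith [neg_abs_le α, abs_nonneg β]
        · linarith [le_abs_self β, abs_nonneg α]
  rw [norm_mul, qd_norm_kernel', Real.exp_add]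
  have hCC : C ≤ |C| := le_abs_self C
  rcases le_total 0 w.re with ht | ht
  · rw [abs_of_nonneg ht]
    calc _ ≤ Real.exp (w.re * z.im) * Real.exp ((|α| + |β|) * |z.re|) *
          (|C| * Real.exp (-p * w.re)) := by
          gcongr
          refine (hp w ⟨hw1, hw2⟩ hT ht).trans ?_
          gcongr
      _ = Real.exp ((|α| + |β|) * |z.re|) * |C| * Real.exp (w.re * z.im + -p * w.re) := by
          rw [Real.exp_add]; ring
      _ ≤ _ := by gcongr; nlinarith
  · rw [abs_of_nonpos ht]
    calc _ ≤ Real.exp (w.re * z.im) * Real.exp ((|α| + |β|) * |z.re|) *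
          (|C| * Real.exp (q * w.re)) := by
          gcongr
          refine (hq w ⟨hw1, hw2⟩ hT ht).trans ?_
          gcongr
      _ = Real.exp ((|α| + |β|) * |z.re|) * |C| * Real.exp (w.re * z.im + q * w.re) := by
          rw [Real.exp_add]; ring
      _ ≤ _ := by gcongr; nlinarith

/-- The canonical contour parameter. -/
def qdEps (b : ℝ) : ℝ := π * min b b⁻¹ / 2

/-- Logarithm of the quantum dilogarithm. -/
def qdL (b : ℝ) (z : ℂ) : ℂ := (1 / 4 : ℂ) * ∫ t : ℝ, ebIntegrand b (qdEps b) z t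

/-- The part of the integrand not depending on `z`. -/
def qdD (b : ℝ) (w : ℂ) : ℂ := (w * Complex.sinh (b * w) * Complex.sinh ((b:ℂ)⁻¹ * w))⁻¹

lemma eb_eq (b : ℝ) (z : ℂ) : eb b z = Complex.exp (qdL b z) := rfl

lemma eb_ne (b : ℝ) (z : ℂ) : eb b z ≠ 0 := Complex.exp_ne_zero _

lemma qd_integrand_eq (b ε : ℝ) (z : ℂ) (t : ℝ) : ebIntegrand b ε z t =
    Complex.exp (-Complex.I * (2 * z) * (t + ε * Complex.I)) * qdD b (t + ε * Complex.I) := by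
  unfold ebIntegrand qdD
  rw [div_eq_mul_inv, mul_comm Complex.I (ε : ℂ)]
  congr 2
  ring

lemma qdL_eq (b : ℝ) (z : ℂ) : qdL b z = (1 / 4 : ℂ) * ∫ t : ℝ,
    Complex.exp (-Complex.I * (2 * z) * (t + qdEps b * Complex.I)) *
      qdD b (t + qdEps b * Complex.I) := by
  unfold qdL
  simp only [qd_integrand_eq]

lemma qdEps_pos {b : ℝ} (hb : 0 < b) : 0 < qdEps b := by
  unfold qdEps
  have := lt_min hb (inv_pos.2 hb)
  positivity

lemma qdEps_inv (b : ℝ) : qdEps b⁻¹ = qdEps b := by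
  unfold qdEps
  rw [inv_inv, min_comm]

lemma qdEps_le {b : ℝ} (hb : 0 < b) : qdEps b ≤ π * b / 2 := by
  unfold qdEps
  have := min_le_left b b⁻¹
  have := Real.pi_pos
  gcongr

lemma qdEps_le' {b : ℝ} (hb : 0 < b) : b⁻¹ * qdEps b ≤ π / 2 := by
  have := qdEps_le hb
  rw [inv_mul_le_iff₀ hb]
  linarith

lemma qdL_inv (b : ℝ) (z : ℂ) : qdL b⁻¹ z = qdL b z := by
  rw [qdL_eq, qdL_eq, qdEps_inv]
  congr 2
  ext t
  unfold qdD
  push_cast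
  rw [inv_inv]
  ring

lemma eb_inv (b : ℝ) (z : ℂ) : eb b⁻¹ z = eb b z := by rw [eb_eq, eb_eq, qdL_inv]

lemma qd_sin_pos {b : ℝ} (hb : 0 < b) : 0 < Real.sin (b⁻¹ * qdEps b) := by
  apply Real.sin_pos_of_pos_of_lt_pi
  · have := qdEps_pos hb
    positivity
  · have := qdEps_le' hb
    linarith [Real.pi_pos]

/-- Lower bound for `sinh` along the contour. -/
lemma qd_sinh_line {b : ℝ} (hb : 0 < b) (t : ℝ) :
    Real.sin (b⁻¹ * qdEps b) / 2 * Real.exp (b⁻¹ * |t|) ≤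
      ‖Complex.sinh ((b:ℂ)⁻¹ * (t + qdEps b * Complex.I))‖ := by
  have e : (b:ℂ)⁻¹ * (t + qdEps b * Complex.I) = ((b⁻¹ : ℝ) : ℂ) * (t + qdEps b * Complex.I) := by
    push_cast; rfl
  have h := qd_sinh_lower_line (w := (b:ℂ)⁻¹ * (t + qdEps b * Complex.I))
  rw [e] at h ⊢
  rw [Complex.re_ofReal_mul, Complex.im_ofReal_mul] at h
  simp only [Complex.add_re, Complex.ofReal_re, Complex.mul_re, Complex.I_re, mul_zero,
    Complex.ofReal_im, Complex.I_im, mul_one, sub_self, add_zero, Complex.add_im, Complex.mul_im,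
    zero_add] at h
  rw [abs_of_pos (qd_sin_pos hb), abs_mul, abs_of_pos (inv_pos.2 hb)] at h
  exact h

lemma qd_sinh_line_ne {b : ℝ} (hb : 0 < b) (t : ℝ) :
    Complex.sinh ((b:ℂ)⁻¹ * (t + qdEps b * Complex.I)) ≠ 0 := by
  have h := qd_sinh_line hb t
  have h2 := qd_sin_pos hb
  intro h0
  rw [h0, norm_zero] at h
  have : 0 < Real.sin (b⁻¹ * qdEps b) / 2 * Real.exp (b⁻¹ * |t|) := by positivity
  linarith

lemma qd_sinh_line_ne' {b : ℝ} (hb : 0 < b) (t : ℝ) :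
    Complex.sinh ((b:ℂ) * (t + qdEps b * Complex.I)) ≠ 0 := by
  have h := qd_sinh_line_ne (inv_pos.2 hb) t
  rwa [qdEps_inv, Complex.ofReal_inv, inv_inv] at h

lemma qd_norm_line_inv {b : ℝ} (hb : 0 < b) (t : ℝ) :
    ‖((t:ℂ) + qdEps b * Complex.I)⁻¹‖ ≤ (qdEps b)⁻¹ := by
  rw [norm_inv]
  refine inv_anti₀ (qdEps_pos hb) ?_
  have := Complex.abs_im_le_norm ((t:ℂ) + qdEps b * Complex.I)
  simpa [abs_of_pos (qdEps_pos hb)] using this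

lemma qd_sinh_line_inv {b : ℝ} (hb : 0 < b) (t : ℝ) :
    ‖(Complex.sinh ((b:ℂ)⁻¹ * (t + qdEps b * Complex.I)))⁻¹‖ ≤
      (Real.sin (b⁻¹ * qdEps b) / 2)⁻¹ * Real.exp (-(b⁻¹ * |t|)) := by
  have h2 := qd_sin_pos hb
  rw [norm_inv, Real.exp_neg, ← mul_inv]
  exact inv_anti₀ (by positivity) (qd_sinh_line hb t)

lemma qdD_bound {b : ℝ} (hb : 0 < b) : ∃ C : ℝ, ∀ t : ℝ,
    ‖qdD b (t + qdEps b * Complex.I)‖ ≤ C * Real.exp (-(b + b⁻¹) * |t|) := by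
  refine ⟨(qdEps b)⁻¹ * (Real.sin (b * qdEps b) / 2)⁻¹ * (Real.sin (b⁻¹ * qdEps b) / 2)⁻¹,
    fun t => ?_⟩
  have h1 := qd_norm_line_inv hb t
  have h2 := qd_sinh_line_inv hb t
  have h3 := qd_sinh_line_inv (inv_pos.2 hb) t
  rw [qdEps_inv, Complex.ofReal_inv, inv_inv, inv_inv] at h3
  have p0 := qdEps_pos hb
  have p1 := qd_sin_pos hb
  have p2 := qd_sin_pos (inv_pos.2 hb)
  rw [qdEps_inv, inv_inv] at p2
  unfold qdD
  rw [mul_inv, mul_inv, norm_mul, norm_mul]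
  calc _ ≤ (qdEps b)⁻¹ * ((Real.sin (b * qdEps b) / 2)⁻¹ * Real.exp (-(b * |t|))) *
      ((Real.sin (b⁻¹ * qdEps b) / 2)⁻¹ * Real.exp (-(b⁻¹ * |t|))) := by gcongr
    _ = (qdEps b)⁻¹ * (Real.sin (b * qdEps b) / 2)⁻¹ * (Real.sin (b⁻¹ * qdEps b) / 2)⁻¹ *
      (Real.exp (-(b * |t|)) * Real.exp (-(b⁻¹ * |t|))) := by ring
    _ = _ := by rw [← Real.exp_add]; congr 2; ring

lemma qdD_cont {b : ℝ} (hb : 0 < b) :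
    Continuous fun t : ℝ => qdD b (t + qdEps b * Complex.I) := by
  unfold qdD
  refine Continuous.inv₀ (by fun_prop) fun t => ?_
  exact mul_ne_zero (mul_ne_zero (qd_line_ne (qdEps_pos hb).ne' t) (qd_sinh_line_ne' hb t))
    (qd_sinh_line_ne hb t)

/-- Convenience: a two-sided bound from a bound with absolute values. -/
lemma qd_two_sided {φ : ℝ → ℂ} {C p : ℝ} (h : ∀ t : ℝ, ‖φ t‖ ≤ C * Real.exp (-p * |t|)) :
    (∀ t, 0 ≤ t → ‖φ t‖ ≤ C * Real.exp (-p * t)) ∧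
    (∀ t, t ≤ 0 → ‖φ t‖ ≤ C * Real.exp (p * t)) := by
  constructor
  · intro t ht
    have := h t
    rwa [abs_of_nonneg ht] at this
  · intro t ht
    have := h t
    rw [abs_of_nonpos ht] at this
    convert this using 3
    ring

lemma qd_im_two (z : ℂ) : (2 * z).im = 2 * z.im := by simp
lemma qd_re_two (z : ℂ) : (2 * z).re = 2 * z.re := by simp

lemma qdL_integrable {b : ℝ} (hb : 0 < b) {z : ℂ} (hz : |z.im| < (b + b⁻¹) / 2) :
    Integrable fun t : ℝ => Complex.exp (-Complex.I * (2 * z) * (t + qdEps b * Complex.I)) *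
      qdD b (t + qdEps b * Complex.I) := by
  obtain ⟨C, hC⟩ := qdD_bound hb
  obtain ⟨h1, h2⟩ := qd_two_sided hC
  rw [abs_lt] at hz
  exact qd_FL_integrable (qdD_cont hb) _ h1 h2 (by rw [qd_im_two]; linarith)
    (by rw [qd_im_two]; linarith)

lemma qdL_differentiableAt {b : ℝ} (hb : 0 < b) {z : ℂ} (hz : |z.im| < (b + b⁻¹) / 2) :
    DifferentiableAt ℂ (qdL b) z := by
  obtain ⟨C, hC⟩ := qdD_bound hb
  obtain ⟨h1, h2⟩ := qd_two_sided hC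
  rw [abs_lt] at hz
  have h := qd_FL_hasDerivAt (qdD_cont hb) (qdEps b) h1 h2 (z := 2 * z)
    (by rw [qd_im_two]; linarith) (by rw [qd_im_two]; linarith)
  have h3 := h.differentiableAt.comp z (differentiableAt_id.const_mul (2:ℂ))
  have h4 := h3.const_mul (1 / 4 : ℂ)
  have e : qdL b = fun z => (1 / 4 : ℂ) * ∫ t : ℝ,
    Complex.exp (-Complex.I * (2 * z) * (t + qdEps b * Complex.I)) *
      qdD b (t + qdEps b * Complex.I) := funext (qdL_eq b)
  rw [e]
  exact h4

lemma eb_differentiableAt {b : ℝ} (hb : 0 < b) {z : ℂ} (hz : |z.im| < (b + b⁻¹) / 2) :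
    DifferentiableAt ℂ (eb b) z := by
  have e : eb b = fun z => Complex.exp (qdL b z) := funext (eb_eq b)
  rw [e]
  exact (qdL_differentiableAt hb hz).cexp

lemma qd_FL_norm_integral {φ : ℝ → ℂ} {C p q s : ℝ}
    (hp : ∀ t, 0 ≤ t → ‖φ t‖ ≤ C * Real.exp (-p * t))
    (hq : ∀ t, t ≤ 0 → ‖φ t‖ ≤ C * Real.exp (q * t)) {d : ℝ} (hd : 0 < d) {z : ℂ}
    (h1 : d ≤ q + z.im) (h2 : d ≤ p - z.im) :
    ‖∫ t : ℝ, Complex.exp (-Complex.I * z * (t + s * Complex.I)) * φ t‖ ≤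
      (C * ∫ t : ℝ, Real.exp (-d * |t|)) * Real.exp (s * z.re) := by
  calc _ ≤ ∫ t : ℝ, C * Real.exp (s * z.re) * Real.exp (-d * |t|) := by
        apply norm_integral_le_of_norm_le ((qd_integrable_exp_abs hd).const_mul _)
        exact Eventually.of_forall fun t => qd_FL_bound hp hq h1 h2 t
    _ = _ := by rw [integral_const_mul]; ring

lemma qdL_bound {b : ℝ} (hb : 0 < b) {δ : ℝ} (hδ : 0 < δ) : ∃ C : ℝ, 0 ≤ C ∧ ∀ z : ℂ,
    |z.im| ≤ (b + b⁻¹) / 2 - δ → ‖qdL b z‖ ≤ C * Real.exp (2 * qdEps b * z.re) := by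
  obtain ⟨C, hC⟩ := qdD_bound hb
  obtain ⟨h1, h2⟩ := qd_two_sided hC
  have hC0 : 0 ≤ C := by
    have := (norm_nonneg _).trans (hC 0)
    simpa using this
  refine ⟨1 / 4 * (C * ∫ t : ℝ, Real.exp (-(2 * δ) * |t|)), ?_, fun z hz => ?_⟩
  · have : 0 ≤ ∫ t : ℝ, Real.exp (-(2 * δ) * |t|) := integral_nonneg fun t => (Real.exp_pos _).le
    positivity
  · rw [abs_le] at hz
    have h := qd_FL_norm_integral (s := qdEps b) h1 h2 (d := 2 * δ) (by positivity) (z := 2 * z)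
      (by rw [qd_im_two]; linarith) (by rw [qd_im_two]; linarith)
    rw [qdL_eq, norm_mul, qd_re_two] at *
    have e : qdEps b * (2 * z.re) = 2 * qdEps b * z.re := by ring
    rw [e] at h
    have n4 : ‖(1 / 4 : ℂ)‖ = 1 / 4 := by norm_num
    rw [n4]
    linarith

lemma qd_inv_im (b : ℝ) (w : ℂ) : ((b:ℂ)⁻¹ * w).im = b⁻¹ * w.im := by
  rw [← Complex.ofReal_inv, Complex.im_ofReal_mul]

lemma qd_inv_re (b : ℝ) (w : ℂ) : ((b:ℂ)⁻¹ * w).re = b⁻¹ * w.re := by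
  rw [← Complex.ofReal_inv, Complex.re_ofReal_mul]

lemma qd_sinh_inv_far {b : ℝ} (hb : 0 < b) {w : ℂ} (h : b ≤ |w.re|) :
    ‖(Complex.sinh ((b:ℂ)⁻¹ * w))⁻¹‖ ≤ 4 * Real.exp (-b⁻¹ * |w.re|) := by
  have h1 : |((b:ℂ)⁻¹ * w).re| = b⁻¹ * |w.re| := by
    rw [qd_inv_re, abs_mul, abs_of_pos (inv_pos.2 hb)]
  have h2 : 1 ≤ |((b:ℂ)⁻¹ * w).re| := by
    rw [h1, ← div_eq_inv_mul, one_le_div hb]; exact h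
  have h3 := qd_sinh_lower_exp h2
  rw [norm_inv]
  rw [h1] at h3
  calc _ ≤ (Real.exp (b⁻¹ * |w.re|) / 4)⁻¹ := inv_anti₀ (by positivity) h3
    _ = _ := by rw [neg_mul, Real.exp_neg, inv_div]; ring

lemma qd_sinhFT {b : ℝ} (hb : 0 < b) {z : ℂ} (hz : |z.im| < b⁻¹ / 2) :
    (1 + Complex.exp (-(2 * π * b * z))) *
      ∫ t : ℝ, Complex.exp (-Complex.I * (2 * z) * (t + qdEps b * Complex.I)) *
        (Complex.sinh ((b:ℂ)⁻¹ * (t + qdEps b * Complex.I)))⁻¹ = -(2 * π * Complex.I * b) := by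
  obtain ⟨E, hE, hexp⟩ := qd_exp_taylor
  obtain ⟨P, ρ, hP, hρ, hPρ, hPs, hPne⟩ := qd_sinh_taylor
  have hε := qdEps_pos hb
  have hε2 := qdEps_le hb
  have hπ := Real.pi_pos
  have hπb : 0 < π * b := by positivity
  have hb0 : (b:ℂ) ≠ 0 := by exact_mod_cast hb.ne'
  set η : ℂ := -Complex.I * (2 * z) with hη
  rw [abs_lt] at hz
  have hPne' : ∀ w ∈ qdStrip (qdEps b - π * b) (qdEps b), P ((b:ℂ)⁻¹ * w) ≠ 0 := by
    intro w hw
    apply hPne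
    rw [qd_inv_im, abs_mul, abs_of_pos (inv_pos.2 hb), inv_mul_lt_iff₀ hb, abs_lt]
    constructor <;> linarith [hw.1, hw.2]
  have key := qd_contour_pole (f := fun w => Complex.exp (η * w) * (Complex.sinh ((b:ℂ)⁻¹ * w))⁻¹)
    (g := fun w => b * ((η * (1 + η * w / 2 + (η * w) ^ 2 / 6 + (η * w) ^ 3 * E (η * w))) -
      ((b:ℂ)⁻¹ ^ 2 * w / 6 + (b:ℂ)⁻¹ ^ 3 * w ^ 2 * ρ ((b:ℂ)⁻¹ * w))) * (P ((b:ℂ)⁻¹ * w))⁻¹)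
    (c1 := b) (c2 := 0) (c3 := 0) (α := qdEps b - π * b) (β := qdEps b) (by linarith) hε ?_ ?_ ?_
  · have e1 : ∀ t : ℝ, Complex.exp (η * (t + ((qdEps b - π * b : ℝ) : ℂ) * Complex.I)) *
        (Complex.sinh ((b:ℂ)⁻¹ * (t + ((qdEps b - π * b : ℝ) : ℂ) * Complex.I)))⁻¹ =
        -Complex.exp (-(2 * π * b * z)) * (Complex.exp (η * (t + qdEps b * Complex.I)) *
        (Complex.sinh ((b:ℂ)⁻¹ * (t + qdEps b * Complex.I)))⁻¹) := by
      intro t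
      have a1 : (b:ℂ)⁻¹ * (t + ((qdEps b - π * b : ℝ) : ℂ) * Complex.I) =
          (b:ℂ)⁻¹ * (t + qdEps b * Complex.I) - π * Complex.I := by
        push_cast; field_simp; ring
      have a2 : η * (t + ((qdEps b - π * b : ℝ) : ℂ) * Complex.I) =
          -(2 * π * b * z) + η * (t + qdEps b * Complex.I) := by
        rw [hη]; push_cast; ring_nf; rw [Complex.I_sq]; ring
      have a3 : Complex.sinh ((b:ℂ)⁻¹ * (t + qdEps b * Complex.I) - π * Complex.I) =
          - Complex.sinh ((b:ℂ)⁻¹ * (t + qdEps b * Complex.I)) := by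
        rw [Complex.sinh_sub, Complex.sinh_mul_I, Complex.cosh_mul_I, Complex.sin_pi, Complex.cos_pi]
        ring
      rw [a1, a2, a3, Complex.exp_add, inv_neg]
      ring
    simp only [e1] at key
    rw [integral_const_mul] at key
    linear_combination -key
  · intro w hw
    apply DifferentiableAt.differentiableWithinAt
    refine DifferentiableAt.mul ?_ (DifferentiableAt.inv (by fun_prop) (hPne' w hw))
    fun_prop
  · intro w hw hw0
    have hPw := hPne' w hw
    rw [hPs, hexp (η * w)]
    have hx := hPρ ((b:ℂ)⁻¹ * w)
    set X := P ((b:ℂ)⁻¹ * w)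
    set Y := ρ ((b:ℂ)⁻¹ * w)
    set Z := E (η * w)
    simp only [zero_mul, add_zero]
    field_simp
    field_simp at hx
    linear_combination -2 * hx
  · apply qdDecay_kernel (C := 4) (p := b⁻¹) (q := b⁻¹) (T := b)
    · intro w _ hT h0
      have := qd_sinh_inv_far hb hT
      rwa [abs_of_nonneg h0] at this
    · intro w _ hT h0
      have := qd_sinh_inv_far hb hT
      rw [abs_of_nonpos h0] at this
      convert this using 3
      ring
    · rw [qd_im_two]; linarith
    · rw [qd_im_two]; linarith


/-- Kernel for the functional equation. -/
def qdPsi (b : ℝ) (w : ℂ) : ℂ := (w * Complex.sinh ((b:ℂ)⁻¹ * w))⁻¹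

lemma qdPsi_cont {b : ℝ} (hb : 0 < b) :
    Continuous fun t : ℝ => qdPsi b (t + qdEps b * Complex.I) := by
  unfold qdPsi
  refine Continuous.inv₀ (by fun_prop) fun t => ?_
  exact mul_ne_zero (qd_line_ne (qdEps_pos hb).ne' t) (qd_sinh_line_ne hb t)

lemma qdPsi_bound {b : ℝ} (hb : 0 < b) : ∃ C : ℝ, ∀ t : ℝ,
    ‖qdPsi b (t + qdEps b * Complex.I)‖ ≤ C * Real.exp (-b⁻¹ * |t|) := by
  refine ⟨(qdEps b)⁻¹ * (Real.sin (b⁻¹ * qdEps b) / 2)⁻¹, fun t => ?_⟩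
  have h1 := qd_norm_line_inv hb t
  have h2 := qd_sinh_line_inv hb t
  have p0 := qdEps_pos hb
  have p1 := qd_sin_pos hb
  unfold qdPsi
  rw [mul_inv, norm_mul]
  calc _ ≤ (qdEps b)⁻¹ * ((Real.sin (b⁻¹ * qdEps b) / 2)⁻¹ * Real.exp (-(b⁻¹ * |t|))) := by gcongr
    _ = _ := by rw [neg_mul]; ring

/-- The integral controlling the functional equation. -/
def qdJ (b : ℝ) (z : ℂ) : ℂ := ∫ t : ℝ,
    Complex.exp (-Complex.I * (2 * z) * (t + qdEps b * Complex.I)) *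
      qdPsi b (t + qdEps b * Complex.I)

lemma qdJ_eq {b : ℝ} (hb : 0 < b) {z : ℂ} (hz : |z.im| < b⁻¹ / 2) :
    qdL b (z - Complex.I * b / 2) - qdL b (z + Complex.I * b / 2) = -(qdJ b z) / 2 := by
  rw [abs_lt] at hz
  have i1 : |(z - Complex.I * b / 2).im| < (b + b⁻¹) / 2 := by
    have : (z - Complex.I * b / 2).im = z.im - b / 2 := by simp
    rw [this, abs_lt]; constructor <;> linarith
  have i2 : |(z + Complex.I * b / 2).im| < (b + b⁻¹) / 2 := by
    have : (z + Complex.I * b / 2).im = z.im + b / 2 := by simp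
    rw [this, abs_lt]; constructor <;> linarith
  rw [qdL_eq, qdL_eq, ← mul_sub, ← integral_sub (qdL_integrable hb i1) (qdL_integrable hb i2)]
  unfold qdJ
  have : ∀ t : ℝ, Complex.exp (-Complex.I * (2 * (z - Complex.I * b / 2)) *
      (t + qdEps b * Complex.I)) * qdD b (t + qdEps b * Complex.I) -
      Complex.exp (-Complex.I * (2 * (z + Complex.I * b / 2)) *
      (t + qdEps b * Complex.I)) * qdD b (t + qdEps b * Complex.I) =
      -2 * (Complex.exp (-Complex.I * (2 * z) * (t + qdEps b * Complex.I)) *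
      qdPsi b (t + qdEps b * Complex.I)) := by
    intro t
    have h1 := qd_line_ne (qdEps_pos hb).ne' t
    have h2 := qd_sinh_line_ne hb t
    have h3 := qd_sinh_line_ne' hb t
    set w : ℂ := t + qdEps b * Complex.I
    have a1 : -Complex.I * (2 * (z - Complex.I * b / 2)) * w =
        -Complex.I * (2 * z) * w + -(b * w) := by
      ring_nf; rw [Complex.I_sq]; ring
    have a2 : -Complex.I * (2 * (z + Complex.I * b / 2)) * w =
        -Complex.I * (2 * z) * w + b * w := by
      ring_nf; rw [Complex.I_sq]; ring
    have a3 : Complex.exp (-(b * w)) - Complex.exp (b * w) = -2 * Complex.sinh (b * w) := by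
      rw [Complex.sinh]; ring
    rw [a1, a2, Complex.exp_add, Complex.exp_add]
    unfold qdD qdPsi
    generalize Complex.sinh ((b:ℂ)⁻¹ * w) = S2 at h2 ⊢
    generalize Complex.sinh ((b:ℂ) * w) = S1 at h3 a3 ⊢
    rw [mul_inv, mul_inv, mul_inv]
    have h4 := mul_inv_cancel₀ h3
    linear_combination (Complex.exp (-Complex.I * (2 * z) * w) * w⁻¹ * S2⁻¹ * S1⁻¹) * a3 -
      2 * (Complex.exp (-Complex.I * (2 * z) * w) * w⁻¹ * S2⁻¹) * h4
  simp only [this]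
  rw [integral_const_mul]
  ring

lemma qdJ_deriv {b : ℝ} (hb : 0 < b) {z : ℂ} (hz : |z.im| < b⁻¹ / 2) :
    ∃ D : ℂ, HasDerivAt (qdJ b) D z ∧ (1 + Complex.exp (-(2 * π * b * z))) * D = -(4 * π * b) := by
  obtain ⟨C, hC⟩ := qdPsi_bound hb
  obtain ⟨h1, h2⟩ := qd_two_sided hC
  have hFT := qd_sinhFT hb hz
  rw [abs_lt] at hz
  have h := qd_FL_hasDerivAt (qdPsi_cont hb) (qdEps b) h1 h2 (z := 2 * z)
    (by rw [qd_im_two]; linarith) (by rw [qd_im_two]; linarith)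
  have h3 := h.comp z ((hasDerivAt_id z).const_mul (2:ℂ))
  refine ⟨_, h3, ?_⟩
  have e : ∀ t : ℝ, -Complex.I * ((t:ℂ) + qdEps b * Complex.I) *
      (Complex.exp (-Complex.I * (2 * z) * (t + qdEps b * Complex.I)) *
        qdPsi b (t + qdEps b * Complex.I)) = -Complex.I *
      (Complex.exp (-Complex.I * (2 * z) * (t + qdEps b * Complex.I)) *
        (Complex.sinh ((b:ℂ)⁻¹ * (t + qdEps b * Complex.I)))⁻¹) := by
    intro t
    have h1 := qd_line_ne (qdEps_pos hb).ne' t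
    unfold qdPsi
    rw [mul_inv]
    have h4 := mul_inv_cancel₀ h1
    generalize ((t:ℂ) + qdEps b * Complex.I) = w at h4 ⊢
    generalize (Complex.sinh ((b:ℂ)⁻¹ * w))⁻¹ = S
    linear_combination (-Complex.I * Complex.exp (-Complex.I * (2 * z) * w) * S) * h4
  simp only [e]
  rw [integral_const_mul]
  linear_combination (-2 * Complex.I) * hFT + (4 * π * b) * Complex.I_sq

lemma qd_one_add_ne {b : ℝ} (hb : 0 < b) {z : ℂ} (hz : |z.im| < b⁻¹ / 2) :
    1 + Complex.exp (2 * π * b * z) ≠ 0 := by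
  intro h
  have hFT := qd_sinhFT hb hz
  have h0 : 1 + Complex.exp (-(2 * π * b * z)) = 0 := by
    rw [Complex.exp_neg]
    have := Complex.exp_ne_zero (2 * π * b * z)
    field_simp
    linear_combination h
  rw [h0, zero_mul] at hFT
  have hb0 : (b:ℂ) ≠ 0 := by exact_mod_cast hb.ne'
  have hπ : (π:ℂ) ≠ 0 := by exact_mod_cast Real.pi_ne_zero
  have : -(2 * π * Complex.I * b) ≠ 0 :=
    neg_ne_zero.2 (mul_ne_zero (mul_ne_zero (mul_ne_zero two_ne_zero hπ) Complex.I_ne_zero) hb0)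
  exact this hFT.symm

/-- The functional equation of the quantum dilogarithm. -/
lemma eb_funeq {b : ℝ} (hb : 0 < b) {z : ℂ} (hz : |z.im| < b⁻¹ / 2) :
    eb b (z - Complex.I * b / 2) =
      (1 + Complex.exp (2 * π * b * z)) * eb b (z + Complex.I * b / 2) := by
  have him : ∀ r : ℝ, (z + r).im = z.im := fun r => by simp
  set N : ℝ → ℂ := fun r => Complex.exp (-(qdJ b (z + r)) / 2) /
    (1 + Complex.exp (2 * π * b * (z + r))) with hN
  have hder : ∀ r : ℝ, HasDerivAt N 0 r := by
    intro r
    have hz' : |(z + r).im| < b⁻¹ / 2 := by rw [him]; exact hz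
    obtain ⟨D, hD, hDe⟩ := qdJ_deriv hb hz'
    have hne := qd_one_add_ne hb hz'
    have hr : HasDerivAt (fun r : ℝ => z + (r:ℂ)) 1 r :=
      (Complex.ofRealCLM.hasDerivAt (x := r)).const_add z
    have h1 : HasDerivAt (fun w => Complex.exp (-(qdJ b w) / 2)) _ (z + r) :=
      (hD.neg.div_const 2).cexp
    have h2 : HasDerivAt (fun w : ℂ => 1 + Complex.exp (2 * π * b * w)) _ (z + r) :=
      (((hasDerivAt_id (z + (r:ℂ))).const_mul (2 * π * b : ℂ)).cexp).const_add 1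
    have h3 := (h1.div h2 hne).comp r hr
    refine h3.congr_deriv ?_
    simp only [id, mul_one]
    rw [div_eq_zero_iff]
    left
    have hee : Complex.exp (-(2 * π * b * (z + r))) * Complex.exp (2 * π * b * (z + r)) = 1 := by
      rw [← Complex.exp_add]; simp
    set e1 := Complex.exp (2 * π * b * (z + r))
    set e2 := Complex.exp (-(2 * π * b * (z + r)))
    set e3 := Complex.exp (-(qdJ b (z + r)) / 2)
    linear_combination (-e3 * e1 / 2) * hDe + (e3 * D / 2) * hee
  have hconst : ∀ r : ℝ, N r = N 0 := fun r =>
    is_const_of_deriv_eq_zero (fun r => (hder r).differentiableAt) (fun r => (hder r).deriv) r 0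
  have hlim : Tendsto N atBot (𝓝 1) := by
    obtain ⟨C, hC⟩ := qdPsi_bound hb
    obtain ⟨h1, h2⟩ := qd_two_sided hC
    rw [abs_lt] at hz
    have hJ : Tendsto (fun r : ℝ => qdJ b (z + r)) atBot (𝓝 0) := by
      set d := b⁻¹ - 2 * |z.im| with hd
      have hdpos : 0 < d := by
        have : |z.im| < b⁻¹ / 2 := abs_lt.2 hz
        linarith
      have hb1 : ∀ r : ℝ, ‖qdJ b (z + r)‖ ≤ (C * ∫ t : ℝ, Real.exp (-d * |t|)) *
          Real.exp (qdEps b * (2 * (z.re + r))) := by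
        intro r
        have := qd_FL_norm_integral (s := qdEps b) h1 h2 hdpos (z := 2 * (z + r))
          (by rw [qd_im_two, him]; linarith [neg_abs_le z.im])
          (by rw [qd_im_two, him]; linarith [le_abs_self z.im])
        rw [qd_re_two] at this
        have e : (z + (r:ℂ)).re = z.re + r := by simp
        rw [e] at this
        exact this
      refine squeeze_zero_norm hb1 ?_
      have ht : Tendsto (fun r : ℝ => qdEps b * (2 * (z.re + r))) atBot atBot := by
        refine Tendsto.const_mul_atBot (qdEps_pos hb) (Tendsto.const_mul_atBot two_pos ?_)
        exact tendsto_atBot_add_const_left _ _ tendsto_id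
      have := (Real.tendsto_exp_atBot.comp ht).const_mul (C * ∫ t : ℝ, Real.exp (-d * |t|))
      simpa using this
    have hE : Tendsto (fun r : ℝ => Complex.exp (2 * π * b * (z + r))) atBot (𝓝 0) := by
      rw [Complex.tendsto_exp_nhds_zero_iff]
      have : ∀ r : ℝ, (2 * π * b * (z + r) : ℂ).re = 2 * π * b * (z.re + r) := by
        intro r
        have e : (2 * π * b * (z + r) : ℂ) = ((2 * π * b : ℝ) : ℂ) * (z + r) := by push_cast; ring
        rw [e, Complex.re_ofReal_mul]; simp
      simp only [this]
      refine Tendsto.const_mul_atBot (by have := Real.pi_pos; positivity) ?_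
      exact tendsto_atBot_add_const_left _ _ tendsto_id
    have h3 : Tendsto N atBot (𝓝 (Complex.exp (-0 / 2) / (1 + 0))) :=
      ((Complex.continuous_exp.tendsto _).comp (hJ.neg.div_const 2)).div
      (hE.const_add 1) (by simp)
    simpa using h3
  have hN0 : N 0 = 1 := by
    have : Tendsto N atBot (𝓝 (N 0)) := tendsto_const_nhds.congr fun r => (hconst r).symm
    exact tendsto_nhds_unique this hlim
  simp only [hN, Complex.ofReal_zero, add_zero] at hN0
  rw [div_eq_one_iff_eq (qd_one_add_ne hb hz)] at hN0
  rw [eb_eq, eb_eq, ← hN0, ← qdJ_eq hb hz, ← Complex.exp_add]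
  congr 1
  ring

lemma qd_sinh_far {b : ℝ} (hb : 0 < b) {w : ℂ} (h : b⁻¹ ≤ |w.re|) :
    ‖(Complex.sinh ((b:ℂ) * w))⁻¹‖ ≤ 4 * Real.exp (-b * |w.re|) := by
  have := qd_sinh_inv_far (inv_pos.2 hb) h
  simpa using this

lemma qdD_neg (b : ℝ) (w : ℂ) : qdD b (-w) = - qdD b w := by
  unfold qdD
  rw [mul_neg, mul_neg, Complex.sinh_neg, Complex.sinh_neg, ← inv_neg]
  congr 1
  ring

lemma qdD_far {b : ℝ} (hb : 0 < b) {w : ℂ} (h : b + b⁻¹ + 1 ≤ |w.re|) :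
    ‖qdD b w‖ ≤ 16 * Real.exp (-(b + b⁻¹) * |w.re|) := by
  have hb' := inv_pos.2 hb
  have h1 := qd_sinh_far hb (w := w) (by linarith)
  have h2 := qd_sinh_inv_far hb (w := w) (by linarith)
  have h3 : ‖w⁻¹‖ ≤ 1 := by
    rw [norm_inv]
    exact inv_le_one_of_one_le₀ (le_trans (by linarith) (Complex.abs_re_le_norm w))
  unfold qdD
  rw [mul_inv, mul_inv, norm_mul, norm_mul]
  calc _ ≤ 1 * (4 * Real.exp (-b * |w.re|)) * (4 * Real.exp (-b⁻¹ * |w.re|)) := by gcongr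
    _ = 16 * (Real.exp (-b * |w.re|) * Real.exp (-b⁻¹ * |w.re|)) := by ring
    _ = _ := by rw [← Real.exp_add]; congr 2; ring

lemma qdL_neg (b : ℝ) (z : ℂ) : qdL b (-z) = -((1 / 4 : ℂ) * ∫ t : ℝ,
    Complex.exp (-Complex.I * (2 * z) * (t + ((-qdEps b : ℝ) : ℂ) * Complex.I)) *
      qdD b (t + ((-qdEps b : ℝ) : ℂ) * Complex.I)) := by
  rw [qdL_eq, ← mul_neg, ← integral_neg, ← integral_neg_eq_self]
  congr 2
  funext t
  have e : (((-t : ℝ) : ℂ) + qdEps b * Complex.I) =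
      -((t:ℂ) + ((-qdEps b : ℝ) : ℂ) * Complex.I) := by push_cast; ring
  rw [e, qdD_neg, mul_neg]
  congr 3
  ring

/-- The inversion relation. -/
lemma qdL_inversion {b : ℝ} (hb : 0 < b) {z : ℂ} (hz : |z.im| < (b + b⁻¹) / 2) :
    qdL b z + qdL b (-z) = π * Complex.I * z ^ 2 +
      π * Complex.I * ((b:ℂ) ^ 2 + ((b:ℂ)⁻¹) ^ 2) / 12 := by
  obtain ⟨E, hE, hexp⟩ := qd_exp_taylor
  obtain ⟨P, ρ, hP, hρ, hPρ, hPs, hPne⟩ := qd_sinh_taylor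
  have hε := qdEps_pos hb
  have hε1 := qdEps_le' hb
  have hε2 : b * qdEps b ≤ π / 2 := by
    have := qdEps_le' (inv_pos.2 hb)
    rwa [inv_inv, qdEps_inv] at this
  have hπ := Real.pi_pos
  have hb' := inv_pos.2 hb
  have hb0 : (b:ℂ) ≠ 0 := by exact_mod_cast hb.ne'
  have hBB : (b:ℂ) * (b:ℂ)⁻¹ = 1 := mul_inv_cancel₀ hb0
  rw [abs_lt] at hz
  have hS : ∀ w ∈ qdStrip (-qdEps b) (qdEps b), P ((b:ℂ) * w) ≠ 0 ∧ P ((b:ℂ)⁻¹ * w) ≠ 0 := by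
    intro w hw
    have hw' : |w.im| ≤ qdEps b := abs_le.2 hw
    constructor
    · apply hPne
      rw [Complex.im_ofReal_mul, abs_mul, abs_of_pos hb]
      have : b * |w.im| ≤ b * qdEps b := by gcongr
      linarith
    · apply hPne
      rw [qd_inv_im, abs_mul, abs_of_pos hb']
      have : b⁻¹ * |w.im| ≤ b⁻¹ * qdEps b := by gcongr
      linarith
  set η : ℂ := -Complex.I * (2 * z) with hη
  set B : ℂ := (b:ℂ) with hB
  set B' : ℂ := (b:ℂ)⁻¹ with hB'
  set β : ℂ := (B ^ 2 + B' ^ 2) / 6 with hβ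
  set c1 : ℂ := η ^ 2 / 2 - β with hc1
  set r : ℂ → ℂ := fun w => B ^ 3 * ρ (B * w) + B' ^ 3 * ρ (B' * w) + w * (B * B') ^ 2 / 36 +
    w ^ 2 * (B ^ 2 * B' ^ 3 * ρ (B' * w) / 6 + B ^ 3 * B' ^ 2 * ρ (B * w) / 6) +
    w ^ 3 * (ρ (B * w) * ρ (B' * w) * (B * B') ^ 3) with hr
  set Q : ℂ → ℂ := fun w => P (B * w) * P (B' * w) with hQ
  have hQr : ∀ w, Q w = 1 + β * w ^ 2 + w ^ 3 * r w := by
    intro w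
    simp only [hQ, hr, hPρ, hβ]
    ring
  set N : ℂ → ℂ := fun w => η ^ 3 / 6 + η ^ 4 * w * E (η * w) - r w * (1 + η * w + c1 * w ^ 2) -
    (η * β + c1 * β * w) with hN
  have hrd : Differentiable ℂ r := by
    have h1 : Differentiable ℂ fun w => ρ (B * w) := hρ.comp (by fun_prop)
    have h2 : Differentiable ℂ fun w => ρ (B' * w) := hρ.comp (by fun_prop)
    simp only [hr]
    fun_prop
  have hNd : Differentiable ℂ N := by
    have h1 : Differentiable ℂ fun w => E (η * w) := hE.comp (by fun_prop)
    simp only [hN]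
    fun_prop
  have hQd : Differentiable ℂ Q := by
    have h1 : Differentiable ℂ fun w => P (B * w) := hP.comp (by fun_prop)
    have h2 : Differentiable ℂ fun w => P (B' * w) := hP.comp (by fun_prop)
    simp only [hQ]
    fun_prop
  have key := qd_contour_pole (f := fun w => Complex.exp (-Complex.I * (2 * z) * w) * qdD b w)
    (g := fun w => N w / Q w) (c1 := c1) (c2 := η) (c3 := 1) (α := -qdEps b) (β := qdEps b)
    (by linarith) hε
    (DifferentiableOn.div hNd.differentiableOn hQd.differentiableOn
      fun w hw => mul_ne_zero (hS w hw).1 (hS w hw).2) ?_ ?_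
  · rw [qdL_neg, qdL_eq]
    have hη2 : η ^ 2 = -4 * z ^ 2 := by
      rw [hη, mul_pow, neg_sq, Complex.I_sq]; ring
    have hc : c1 = -2 * z ^ 2 - (B ^ 2 + B' ^ 2) / 6 := by rw [hc1, hη2, hβ]; ring
    rw [hc] at key
    linear_combination (-1 / 4 : ℂ) * key
  · intro w hw hw0
    have hQ0 : Q w ≠ 0 := mul_ne_zero (hS w hw).1 (hS w hw).2
    have hD : qdD b w = (w ^ 3 * Q w)⁻¹ := by
      unfold qdD
      rw [hPs, hPs]
      congr 1
      simp only [hQ]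
      linear_combination (w ^ 3 * P (B * w) * P (B' * w)) * hBB
    have hnum : Complex.exp (η * w) = N w * w ^ 3 + Q w * (c1 * w ^ 2 + η * w + 1) := by
      rw [hexp, hQr]
      simp only [hN, hc1]
      ring
    show Complex.exp (η * w) * qdD b w = N w / Q w + _ + _ + _
    rw [hD, hnum]
    field_simp
    ring
  · refine qdDecay_kernel (C := 16) (p := b + b⁻¹) (q := b + b⁻¹) (T := b + b⁻¹ + 1) ?_ ?_ ?_ ?_
    · intro w _ hT h0
      have := qdD_far hb hT
      rwa [abs_of_nonneg h0] at this
    · intro w _ hT h0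
      have := qdD_far hb hT
      rw [abs_of_nonpos h0] at this
      convert this using 3
      ring
    · rw [qd_im_two]; linarith
    · rw [qd_im_two]; linarith

/-- Uniform bound of the modulus of `e_b` in substrips. -/
lemma qdL_re_bound {b : ℝ} (hb : 0 < b) {δ : ℝ} (hδ : 0 < δ) : ∃ C : ℝ, 0 ≤ C ∧ ∀ z : ℂ,
    |z.im| ≤ (b + b⁻¹) / 2 - δ → |(qdL b z).re + 2 * π * max z.re 0 * z.im| ≤ C := by
  obtain ⟨C, hC0, hC⟩ := qdL_bound hb hδ
  have hε := qdEps_pos hb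
  refine ⟨C, hC0, fun z hz => ?_⟩
  have hsmall : ∀ z : ℂ, |z.im| ≤ (b + b⁻¹) / 2 - δ → z.re ≤ 0 → ‖qdL b z‖ ≤ C := by
    intro z hz h0
    refine (hC z hz).trans ?_
    have : Real.exp (2 * qdEps b * z.re) ≤ 1 := by
      rw [Real.exp_le_one_iff]
      exact mul_nonpos_of_nonneg_of_nonpos (by positivity) h0
    nlinarith
  rcases le_total z.re 0 with h0 | h0
  · rw [max_eq_right h0]
    simp only [mul_zero, zero_mul, add_zero]
    exact (Complex.abs_re_le_norm _).trans (hsmall z hz h0)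
  · rw [max_eq_left h0]
    have h1 := hsmall (-z) (by simpa using hz) (by simpa using h0)
    have h2 := congrArg Complex.re (qdL_inversion hb (z := z) (by linarith))
    have e1 : (π * Complex.I * z ^ 2 : ℂ).re = -(2 * π * z.re * z.im) := by
      have : (π * Complex.I * z ^ 2 : ℂ) = (π:ℝ) * (Complex.I * z ^ 2) := by push_cast; ring
      rw [this, Complex.re_ofReal_mul, sq]
      simp [Complex.mul_re, Complex.mul_im]
      ring
    have e2 : (π * Complex.I * ((b:ℂ) ^ 2 + ((b:ℂ)⁻¹) ^ 2) / 12 : ℂ).re = 0 := by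
      have : (π * Complex.I * ((b:ℂ) ^ 2 + ((b:ℂ)⁻¹) ^ 2) / 12 : ℂ) =
          ((π * (b ^ 2 + b⁻¹ ^ 2) / 12 : ℝ):ℂ) * Complex.I := by push_cast; ring
      rw [this, Complex.re_ofReal_mul]; simp
    rw [Complex.add_re, Complex.add_re, e1, e2] at h2
    have h3 : (qdL b z).re + 2 * π * z.re * z.im = -(qdL b (-z)).re := by linarith
    rw [h3, abs_neg]
    exact (Complex.abs_re_le_norm _).trans h1

lemma eb_norm_upper {b : ℝ} (hb : 0 < b) {δ : ℝ} (hδ : 0 < δ) : ∃ C : ℝ, 0 < C ∧ ∀ z : ℂ,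
    |z.im| ≤ (b + b⁻¹) / 2 - δ →
      ‖eb b z‖ ≤ C * Real.exp (-(2 * π * max z.re 0 * z.im)) ∧
      ‖(eb b z)⁻¹‖ ≤ C * Real.exp (2 * π * max z.re 0 * z.im) := by
  obtain ⟨C, hC0, hC⟩ := qdL_re_bound hb hδ
  refine ⟨Real.exp C, Real.exp_pos _, fun z hz => ?_⟩
  have h := abs_le.1 (hC z hz)
  rw [eb_eq, ← Complex.exp_neg, Complex.norm_exp, Complex.norm_exp, ← Real.exp_add, ← Real.exp_add,
    Real.exp_le_exp, Real.exp_le_exp, Complex.neg_re]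
  constructor <;> linarith [h.1, h.2]

/-- Ratio bound. -/
lemma eb_ratio_bound {b : ℝ} (hb : 0 < b) {δ : ℝ} (hδ : 0 < δ) (d : ℂ) : ∃ C : ℝ, 0 < C ∧
    ∀ z1 z2 : ℂ, |z1.im| ≤ (b + b⁻¹) / 2 - δ → |z2.im| ≤ (b + b⁻¹) / 2 - δ → z1 - z2 = d →
      ‖eb b z1 / eb b z2‖ ≤ C * Real.exp (-(2 * π * max z1.re 0 * d.im)) := by
  obtain ⟨C, hC0, hC⟩ := eb_norm_upper hb hδ
  set Q := b + b⁻¹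
  refine ⟨C ^ 2 * Real.exp (2 * π * |d.re| * (Q / 2)), by positivity, fun z1 z2 h1 h2 h => ?_⟩
  have a1 := (hC z1 h1).1
  have a2 := (hC z2 h2).2
  rw [div_eq_mul_inv, norm_mul]
  have hd1 : d.re = z1.re - z2.re := by rw [← h]; simp
  have hd2 : d.im = z1.im - z2.im := by rw [← h]; simp
  have hm : |max z2.re 0 - max z1.re 0| ≤ |d.re| := by
    have := abs_max_sub_max_le_abs z2.re z1.re 0
    rw [hd1, abs_sub_comm z1.re]; exact this
  have hz2 : |z2.im| ≤ Q / 2 := by linarith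
  have hprod : (max z2.re 0 - max z1.re 0) * z2.im ≤ |d.re| * (Q / 2) := by
    calc _ ≤ |(max z2.re 0 - max z1.re 0) * z2.im| := le_abs_self _
      _ = |max z2.re 0 - max z1.re 0| * |z2.im| := abs_mul _ _
      _ ≤ _ := by gcongr
  calc _ ≤ (C * Real.exp (-(2 * π * max z1.re 0 * z1.im))) *
        (C * Real.exp (2 * π * max z2.re 0 * z2.im)) := by gcongr
    _ = C ^ 2 * Real.exp (-(2 * π * max z1.re 0 * z1.im) + 2 * π * max z2.re 0 * z2.im) := by
        rw [Real.exp_add]; ring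
    _ ≤ C ^ 2 * Real.exp (2 * π * |d.re| * (Q / 2) + -(2 * π * max z1.re 0 * d.im)) := by
        refine mul_le_mul_of_nonneg_left (Real.exp_le_exp.2 ?_) (by positivity)
        rw [hd2]
        have := mul_le_mul_of_nonneg_left hprod (by have := Real.pi_pos; positivity : 0 ≤ 2 * π)
        linarith
    _ = _ := by rw [Real.exp_add]; ring

lemma qd_periodic_deriv {R : ℂ → ℂ} {A B b κ : ℝ} (hb : 0 < b) (hAB : A + b < B)
    (hR : DifferentiableOn ℂ R {w | A < w.im ∧ w.im < B})
    (hper : ∀ u : ℂ, A < u.im → u.im + b < B → R (u + b * Complex.I) = R u)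
    (hκ : κ < 2 * (π / b))
    (hgr : ∀ α β : ℝ, A < α → β < B → ∃ C : ℝ, 0 ≤ C ∧ ∀ u : ℂ, α ≤ u.im → u.im ≤ β →
      ‖R u‖ ≤ C * Real.exp (κ * |u.re|)) (hκ0 : 0 ≤ κ)
    {u : ℂ} (hu1 : A < u.im) (hu2 : u.im < B) : deriv R u = 0 := by
  obtain ⟨P, ρ, hP, hρ, hPρ, hPs, hPne⟩ := qd_sinh_taylor
  have hπ := Real.pi_pos
  obtain ⟨α, hα1, hα2⟩ : ∃ α, max A (u.im - b) < α ∧ α < min u.im (B - b) := by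
    apply exists_between
    rw [max_lt_iff, lt_min_iff, lt_min_iff]
    refine ⟨⟨?_, ?_⟩, ?_, ?_⟩ <;> linarith
  rw [max_lt_iff] at hα1
  rw [lt_min_iff] at hα2
  set S : Set ℂ := {w | A < w.im ∧ w.im < B} with hS
  have hSo : IsOpen S := (isOpen_lt continuous_const Complex.continuous_im).inter
    (isOpen_lt Complex.continuous_im continuous_const)
  set S' : Set ℂ := {w | u + w ∈ S} with hS'
  have hSo' : IsOpen S' := hSo.preimage (by fun_prop)
  have h0 : S' ∈ 𝓝 (0:ℂ) := hSo'.mem_nhds (by simp [hS', hS, hu1, hu2])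
  set G : ℂ → ℂ := fun w => R (u + w) with hG
  have hGd : DifferentiableOn ℂ G S' := hR.comp (by fun_prop) fun w hw => hw
  set G1 := dslope G 0 with hG1
  have hG1d : DifferentiableOn ℂ G1 S' := (Complex.differentiableOn_dslope h0).2 hGd
  set G2 := dslope G1 0 with hG2
  have hG2d : DifferentiableOn ℂ G2 S' := (Complex.differentiableOn_dslope h0).2 hG1d
  have e1 : ∀ w, G w = G 0 + w * G1 w := by
    intro w
    have := sub_smul_dslope G 0 w
    simp only [sub_zero, smul_eq_mul] at this
    rw [hG1, this]; ring
  have e2 : ∀ w, G1 w = G1 0 + w * G2 w := by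
    intro w
    have := sub_smul_dslope G1 0 w
    simp only [sub_zero, smul_eq_mul] at this
    rw [hG2, this]; ring
  set k : ℝ := π / b with hk
  have hk0 : 0 < k := by positivity
  have hkC : (k:ℂ) ≠ 0 := by exact_mod_cast hk0.ne'
  have hkb : k * b = π := by rw [hk]; field_simp
  set T : ℂ → ℂ := fun w => (k:ℂ) ^ 2 * (2 * (1 / 6 + k * w * ρ (k * w)) +
    (k * w) ^ 2 * (1 / 6 + k * w * ρ (k * w)) ^ 2) with hT
  have hTd : Differentiable ℂ T := by
    have h1 : Differentiable ℂ fun w => ρ (k * w) := hρ.comp (by fun_prop)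
    simp only [hT]; fun_prop
  have hPT : ∀ w, P (k * w) ^ 2 = 1 + w ^ 2 * T w := by
    intro w; rw [hPρ]; simp only [hT]; ring
  have hPd : Differentiable ℂ fun w => P (k * w) ^ 2 := by
    have h1 : Differentiable ℂ fun w => P (k * w) := hP.comp (by fun_prop)
    fun_prop
  have hsub : ∀ w ∈ qdStrip (α - u.im) (α + b - u.im), w ∈ S' := by
    intro w hw
    constructor
    · have := hw.1; rw [Complex.add_im]; linarith
    · have := hw.2; rw [Complex.add_im]; linarith
  have hP0 : ∀ w ∈ qdStrip (α - u.im) (α + b - u.im), P (k * w) ≠ 0 := by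
    intro w hw
    apply hPne
    rw [Complex.im_ofReal_mul, abs_mul, abs_of_pos hk0, ← hkb]
    have : |w.im| < b := by
      rw [abs_lt]; constructor
      · linarith [hw.1]
      · linarith [hw.2]
    gcongr
  have key := qd_contour_pole (f := fun w => G w * ((Complex.sinh (k * w)) ^ 2)⁻¹)
    (g := fun w => (G2 w - (G 0 + G1 0 * w) * T w) / ((k:ℂ) ^ 2 * P (k * w) ^ 2))
    (c1 := G1 0 / (k:ℂ) ^ 2) (c2 := G 0 / (k:ℂ) ^ 2) (c3 := 0)
    (α := α - u.im) (β := α + b - u.im) (by linarith) (by linarith) ?_ ?_ ?_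
  · have hcancel : ∀ t : ℝ,
        G (t + ((α + b - u.im : ℝ) : ℂ) * Complex.I) *
          ((Complex.sinh (k * (t + ((α + b - u.im : ℝ) : ℂ) * Complex.I))) ^ 2)⁻¹ =
        G (t + ((α - u.im : ℝ) : ℂ) * Complex.I) *
          ((Complex.sinh (k * (t + ((α - u.im : ℝ) : ℂ) * Complex.I))) ^ 2)⁻¹ := by
      intro t
      have hkb' : (k:ℂ) * b = π := by exact_mod_cast hkb
      have a1 : (k:ℂ) * (t + ((α + b - u.im : ℝ) : ℂ) * Complex.I) =
          k * (t + ((α - u.im : ℝ) : ℂ) * Complex.I) + π * Complex.I := by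
        rw [← hkb']; push_cast; ring
      have a2 : Complex.sinh ((k:ℂ) * (t + ((α - u.im : ℝ) : ℂ) * Complex.I) + π * Complex.I) =
          - Complex.sinh ((k:ℂ) * (t + ((α - u.im : ℝ) : ℂ) * Complex.I)) := by
        rw [Complex.sinh_add, Complex.cosh_mul_I, Complex.sinh_mul_I]
        simp
      have a3 : G (t + ((α + b - u.im : ℝ) : ℂ) * Complex.I) =
          G (t + ((α - u.im : ℝ) : ℂ) * Complex.I) := by
        have := hper (u + (t + ((α - u.im : ℝ) : ℂ) * Complex.I)) (by simp; linarith)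
          (by simp; linarith)
        simp only [hG]
        rw [← this]
        congr 1
        push_cast; ring
      rw [a1, a2, a3, neg_sq]
    simp only [hcancel, sub_self] at key
    have hne : (2 * π * Complex.I : ℂ) ≠ 0 := by
      simp [Real.pi_ne_zero]
    have h1 : G1 0 = 0 := by
      rcases mul_eq_zero.1 key.symm with h | h
      · exact absurd h hne
      · rcases div_eq_zero_iff.1 h with h | h
        · exact h
        · exact absurd h (pow_ne_zero _ hkC)
    rw [hG1, dslope_same, hG, deriv_comp_const_add, add_zero] at h1
    exact h1
  · refine DifferentiableOn.div ?_ ((hPd.const_mul _).differentiableOn) ?_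
    · refine DifferentiableOn.sub (hG2d.mono hsub) ?_
      refine Differentiable.differentiableOn ?_
      fun_prop
    · intro w hw
      exact mul_ne_zero (pow_ne_zero _ hkC) (pow_ne_zero _ (hP0 w hw))
  · intro w hw hw0
    have hne := hP0 w hw
    show G w * _ = _
    rw [e1 w, e2 w, hPs]
    have h := hPT w
    have hP2 : (1 + w ^ 2 * T w) ≠ 0 := by rw [← h]; exact pow_ne_zero _ hne
    rw [mul_pow, mul_pow, h]
    field_simp
    ring
  · obtain ⟨C, hC0, hC⟩ := hgr α (α + b) (by linarith) (by linarith)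
    refine ⟨C * Real.exp (κ * |u.re|) * 16, 2 * k - κ, k⁻¹, by linarith, ?_⟩
    intro w hw1 hw2 hT
    have h1 := qd_sinh_far hk0 hT
    have h2 := hC (u + w) (by rw [Complex.add_im]; linarith) (by rw [Complex.add_im]; linarith)
    beta_reduce
    rw [← inv_pow, norm_mul, norm_pow]
    have h3 : Real.exp (κ * |(u + w).re|) ≤ Real.exp (κ * |u.re|) * Real.exp (κ * |w.re|) := by
      rw [← Real.exp_add, Real.exp_le_exp, ← mul_add, Complex.add_re]
      exact mul_le_mul_of_nonneg_left (abs_add_le _ _) hκ0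
    calc ‖G w‖ * _ ≤ (C * (Real.exp (κ * |u.re|) * Real.exp (κ * |w.re|))) *
          (4 * Real.exp (-k * |w.re|)) ^ 2 := by
            gcongr
            exact h2.trans (by gcongr)
      _ = C * Real.exp (κ * |u.re|) * 16 * (Real.exp (κ * |w.re|) * Real.exp (-k * |w.re|) *
          Real.exp (-k * |w.re|)) := by ring
      _ = _ := by
        rw [← Real.exp_add, ← Real.exp_add]
        congr 2
        ring

lemma qd_periodic_const {R : ℂ → ℂ} {A B b κ : ℝ} (hb : 0 < b) (hAB : A + b < B)
    (hR : DifferentiableOn ℂ R {w | A < w.im ∧ w.im < B})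
    (hper : ∀ u : ℂ, A < u.im → u.im + b < B → R (u + b * Complex.I) = R u)
    (hκ : κ < 2 * (π / b))
    (hgr : ∀ α β : ℝ, A < α → β < B → ∃ C : ℝ, 0 ≤ C ∧ ∀ u : ℂ, α ≤ u.im → u.im ≤ β →
      ‖R u‖ ≤ C * Real.exp (κ * |u.re|)) (hκ0 : 0 ≤ κ)
    {u v : ℂ} (hu : A < u.im ∧ u.im < B) (hv : A < v.im ∧ v.im < B) : R u = R v := by
  have hSo : IsOpen {w : ℂ | A < w.im ∧ w.im < B} :=
    (isOpen_lt continuous_const Complex.continuous_im).inter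
    (isOpen_lt Complex.continuous_im continuous_const)
  have hSc : Convex ℝ {w : ℂ | A < w.im ∧ w.im < B} :=
    (convex_halfSpace_im_gt A).inter (convex_halfSpace_im_lt B)
  exact hSo.is_const_of_deriv_eq_zero hSc.isPreconnected hR
    (fun w hw => qd_periodic_deriv hb hAB hR hper hκ hgr hκ0 hw.1 hw.2) hu hv

lemma cb_im (b : ℝ) : (cb b).im = (b + b⁻¹) / 2 := by
  have : cb b = (((b + b⁻¹) / 2 : ℝ) : ℂ) * Complex.I := by unfold cb; push_cast; ring
  rw [this, Complex.im_ofReal_mul]; simp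

lemma cb_re (b : ℝ) : (cb b).re = 0 := by
  have : cb b = (((b + b⁻¹) / 2 : ℝ) : ℂ) * Complex.I := by unfold cb; push_cast; ring
  rw [this, Complex.re_ofReal_mul]; simp

/-- The quotient in the integrand. -/
def qdH (b : ℝ) (x y : ℂ) : ℂ := eb b (y + cb b) / eb b (y - x - cb b)

lemma qdH_bound {b : ℝ} (hb : 0 < b) {x : ℂ} (hx1 : -((b + b⁻¹) / 2) < x.im) {α β : ℝ}
    (hα : x.im < α) (hαβ : α ≤ β) (hβ : β < 0) : ∃ C : ℝ, 0 < C ∧ ∀ y ∈ qdStrip α β,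
      ‖qdH b x y‖ ≤ C * Real.exp (-(2 * π * max y.re 0 * (b + b⁻¹ + x.im))) := by
  set δ := min (-β) (α - x.im) with hδ
  have hδ0 : 0 < δ := lt_min (by linarith) (by linarith)
  have hδ1 : δ ≤ -β := min_le_left _ _
  have hδ2 : δ ≤ α - x.im := min_le_right _ _
  obtain ⟨C, hC0, hC⟩ := eb_ratio_bound hb hδ0 (x + 2 * cb b)
  refine ⟨C, hC0, fun y hy => ?_⟩
  have e1 : (y + cb b).im = y.im + (b + b⁻¹) / 2 := by rw [Complex.add_im, cb_im]
  have e2 : (y - x - cb b).im = y.im - x.im - (b + b⁻¹) / 2 := by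
    rw [Complex.sub_im, Complex.sub_im, cb_im]
  have e3 : (y + cb b).re = y.re := by rw [Complex.add_re, cb_re, add_zero]
  have e4 : (x + 2 * cb b).im = b + b⁻¹ + x.im := by
    rw [Complex.add_im, qd_im_two, cb_im]; ring
  have := hC (y + cb b) (y - x - cb b) ?_ ?_ (by ring)
  · rw [e3, e4] at this; exact this
  · rw [e1, abs_le]; constructor <;> linarith [hy.1, hy.2]
  · rw [e2, abs_le]; constructor <;> linarith [hy.1, hy.2]

lemma qdH_differentiableAt {b : ℝ} (hb : 0 < b) {x : ℂ} (hx1 : -((b + b⁻¹) / 2) < x.im)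
    {y : ℂ} (h1 : x.im < y.im) (h2 : y.im < 0) : DifferentiableAt ℂ (qdH b x) y := by
  have e1 : (y + cb b).im = y.im + (b + b⁻¹) / 2 := by rw [Complex.add_im, cb_im]
  have e2 : (y - x - cb b).im = y.im - x.im - (b + b⁻¹) / 2 := by
    rw [Complex.sub_im, Complex.sub_im, cb_im]
  have d1 : DifferentiableAt ℂ (fun y => eb b (y + cb b)) y :=
    DifferentiableAt.comp (f := fun y => y + cb b) y
      (eb_differentiableAt hb (by rw [e1, abs_lt]; constructor <;> linarith)) (by fun_prop)
  have d2 : DifferentiableAt ℂ (fun y => eb b (y - x - cb b)) y :=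
    DifferentiableAt.comp (f := fun y => y - x - cb b) y
      (eb_differentiableAt hb (by rw [e2, abs_lt]; constructor <;> linarith)) (by fun_prop)
  exact d1.div d2 (eb_ne _ _)

lemma qd_line_im (s t : ℝ) : ((t:ℂ) + s * Complex.I).im = s := by simp
lemma qd_line_re (s t : ℝ) : ((t:ℂ) + s * Complex.I).re = t := by simp

lemma qdH_cont {b : ℝ} (hb : 0 < b) {x : ℂ} (hx1 : -((b + b⁻¹) / 2) < x.im) {s : ℝ}
    (hs1 : x.im < s) (hs2 : s < 0) : Continuous fun t : ℝ => qdH b x (t + s * Complex.I) := by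
  rw [continuous_iff_continuousAt]
  intro t
  have := (qdH_differentiableAt hb hx1 (y := t + s * Complex.I) (by rw [qd_line_im]; exact hs1)
    (by rw [qd_line_im]; exact hs2)).continuousAt
  exact ContinuousAt.comp (f := fun t : ℝ => (t:ℂ) + s * Complex.I) this (by fun_prop)

lemma qdH_line {b : ℝ} (hb : 0 < b) {x : ℂ} (hx1 : -((b + b⁻¹) / 2) < x.im) {s : ℝ}
    (hs1 : x.im < s) (hs2 : s < 0) : ∃ C : ℝ, 0 < C ∧
    (∀ t : ℝ, 0 ≤ t → ‖qdH b x (t + s * Complex.I)‖ ≤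
      C * Real.exp (-(2 * π * (b + b⁻¹ + x.im)) * t)) ∧
    (∀ t : ℝ, t ≤ 0 → ‖qdH b x (t + s * Complex.I)‖ ≤ C * Real.exp (0 * t)) := by
  obtain ⟨C, hC0, hC⟩ := qdH_bound hb hx1 hs1 le_rfl hs2
  refine ⟨C, hC0, fun t ht => ?_, fun t ht => ?_⟩
  · have := hC (t + s * Complex.I) ⟨by rw [qd_line_im], by rw [qd_line_im]⟩
    rw [qd_line_re, max_eq_left ht] at this
    convert this using 3
    ring
  · have := hC (t + s * Complex.I) ⟨by rw [qd_line_im], by rw [qd_line_im]⟩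
    rw [qd_line_re, max_eq_right ht] at this
    convert this using 3
    ring

/-- The Fourier integral. -/
def qdF (b : ℝ) (x : ℂ) (s : ℝ) (v : ℂ) : ℂ := ∫ t : ℝ,
  Complex.exp (-Complex.I * (2 * π * v) * (t + s * Complex.I)) * qdH b x (t + s * Complex.I)

lemma qd_im_twopi (v : ℂ) : (2 * π * v : ℂ).im = 2 * π * v.im := by
  have : (2 * π * v : ℂ) = ((2 * π : ℝ) : ℂ) * v := by push_cast; ring
  rw [this, Complex.im_ofReal_mul]

lemma qd_re_twopi (v : ℂ) : (2 * π * v : ℂ).re = 2 * π * v.re := by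
  have : (2 * π * v : ℂ) = ((2 * π : ℝ) : ℂ) * v := by push_cast; ring
  rw [this, Complex.re_ofReal_mul]

lemma qdF_integrable {b : ℝ} (hb : 0 < b) {x : ℂ} (hx1 : -((b + b⁻¹) / 2) < x.im) {s : ℝ}
    (hs1 : x.im < s) (hs2 : s < 0) {v : ℂ} (hv1 : 0 < v.im) (hv2 : v.im < b + b⁻¹ + x.im) :
    Integrable fun t : ℝ => Complex.exp (-Complex.I * (2 * π * v) * (t + s * Complex.I)) *
      qdH b x (t + s * Complex.I) := by
  obtain ⟨C, hC0, hp, hq⟩ := qdH_line hb hx1 hs1 hs2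
  have hπ : 0 < 2 * π := by have := Real.pi_pos; positivity
  refine qd_FL_integrable (qdH_cont hb hx1 hs1 hs2) s hp hq ?_ ?_
  · rw [qd_im_twopi, neg_zero]; positivity
  · rw [qd_im_twopi]; gcongr

lemma qdF_differentiableAt {b : ℝ} (hb : 0 < b) {x : ℂ} (hx1 : -((b + b⁻¹) / 2) < x.im) {s : ℝ}
    (hs1 : x.im < s) (hs2 : s < 0) {v : ℂ} (hv1 : 0 < v.im) (hv2 : v.im < b + b⁻¹ + x.im) :
    DifferentiableAt ℂ (qdF b x s) v := by
  obtain ⟨C, hC0, hp, hq⟩ := qdH_line hb hx1 hs1 hs2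
  have hπ : 0 < 2 * π := by have := Real.pi_pos; positivity
  have h := (qd_FL_hasDerivAt (qdH_cont hb hx1 hs1 hs2) s hp hq (z := 2 * π * v) ?_ ?_)
  · exact DifferentiableAt.comp (f := fun v : ℂ => 2 * π * v) v h.differentiableAt (by fun_prop)
  · rw [qd_im_twopi, neg_zero]; positivity
  · rw [qd_im_twopi]; gcongr

lemma qdF_bound {b : ℝ} (hb : 0 < b) {x : ℂ} (hx1 : -((b + b⁻¹) / 2) < x.im) {s : ℝ}
    (hs1 : x.im < s) (hs2 : s < 0) {α β : ℝ} (hα : 0 < α) (hβ : β < b + b⁻¹ + x.im) :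
    ∃ C : ℝ, 0 ≤ C ∧ ∀ v : ℂ, α ≤ v.im → v.im ≤ β →
      ‖qdF b x s v‖ ≤ C * Real.exp (2 * π * s * v.re) := by
  obtain ⟨C, hC0, hp, hq⟩ := qdH_line hb hx1 hs1 hs2
  have hπ : 0 < 2 * π := by have := Real.pi_pos; positivity
  set d := min (2 * π * α) (2 * π * (b + b⁻¹ + x.im - β)) with hd
  have hd0 : 0 < d := lt_min (by positivity) (mul_pos hπ (by linarith))
  have hd1 : d ≤ 2 * π * α := min_le_left _ _
  have hd2 : d ≤ 2 * π * (b + b⁻¹ + x.im - β) := min_le_right _ _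
  refine ⟨C * ∫ t : ℝ, Real.exp (-d * |t|), mul_nonneg hC0.le
    (integral_nonneg fun t => (Real.exp_pos _).le), fun v h1 h2 => ?_⟩
  have h := qd_FL_norm_integral (s := s) hp hq hd0 (z := 2 * π * v) ?_ ?_
  · rw [qd_re_twopi] at h
    have e : s * (2 * π * v.re) = 2 * π * s * v.re := by ring
    rw [e] at h
    exact h
  · rw [qd_im_twopi, zero_add]
    exact hd1.trans (by gcongr)
  · rw [qd_im_twopi]
    refine hd2.trans ?_
    have := mul_le_mul_of_nonneg_left h2 hπ.le
    linarith

lemma qdF_shift {b : ℝ} (hb : 0 < b) {x : ℂ} (hx1 : -((b + b⁻¹) / 2) < x.im) {s s' : ℝ}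
    (hs1 : x.im < s) (hss : s ≤ s') (hs2 : s' < 0) {v : ℂ} (hv1 : 0 < v.im)
    (hv2 : v.im < b + b⁻¹ + x.im) : qdF b x s v = qdF b x s' v := by
  obtain ⟨C, hC0, hC⟩ := qdH_bound hb hx1 hs1 hss hs2
  have hπ : 0 < 2 * π := by have := Real.pi_pos; positivity
  refine qd_contour_shift (g := fun y => Complex.exp (-Complex.I * (2 * π * v) * y) * qdH b x y)
    hss ?_ ?_
  · intro y hy
    refine DifferentiableAt.differentiableWithinAt ?_
    refine DifferentiableAt.mul (by fun_prop) (qdH_differentiableAt hb hx1 ?_ ?_)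
    · linarith [hy.1]
    · linarith [hy.2]
  · refine qdDecay_kernel (C := C) (p := 2 * π * (b + b⁻¹ + x.im)) (q := 0) (T := 0) ?_ ?_ ?_ ?_
    · intro y hy _ h0
      have := hC y hy
      rw [max_eq_left h0] at this
      convert this using 3
      ring
    · intro y hy _ h0
      have := hC y hy
      rw [max_eq_right h0] at this
      convert this using 3
      ring
    · rw [qd_im_twopi, neg_zero]; positivity
    · rw [qd_im_twopi]; gcongr

lemma stmt9_eq (b : ℝ) (u x : ℂ) (ε t : ℝ) : stmt9Integrand b u x ε t =
    Complex.exp (-Complex.I * (2 * π * (u + cb b)) * (t + ((-ε : ℝ) : ℂ) * Complex.I)) *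
      qdH b x (t + ((-ε : ℝ) : ℂ) * Complex.I) := by
  unfold stmt9Integrand qdH
  have e : (t:ℂ) - Complex.I * ε = t + ((-ε : ℝ) : ℂ) * Complex.I := by push_cast; ring
  rw [e, mul_div_assoc]
  congr 2
  ring

lemma eb_step {b : ℝ} (hb : 0 < b) {z : ℂ} (h1 : -((b + b⁻¹) / 2) < z.im)
    (h2 : z.im + b < (b + b⁻¹) / 2) :
    eb b z = (1 - Complex.exp (2 * π * b * (z + cb b))) * eb b (z + b * Complex.I) := by
  have hb0 : (b:ℂ) ≠ 0 := by exact_mod_cast hb.ne'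
  have hBB : (b:ℂ) * (b:ℂ)⁻¹ = 1 := mul_inv_cancel₀ hb0
  have e : (z + Complex.I * b / 2).im = z.im + b / 2 := by simp
  have h := eb_funeq hb (z := z + Complex.I * b / 2)
    (by rw [e, abs_lt]; constructor <;> linarith)
  have a1 : z + Complex.I * b / 2 - Complex.I * b / 2 = z := by ring
  have a2 : z + Complex.I * b / 2 + Complex.I * b / 2 = z + b * Complex.I := by ring
  have a3 : (2 * π * b * (z + cb b) : ℂ) =
      2 * π * b * (z + Complex.I * b / 2) + π * Complex.I := by
    unfold cb
    linear_combination (π * Complex.I) * hBB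
  rw [a1, a2] at h
  rw [a3, Complex.exp_add, Complex.exp_pi_mul_I, h]
  ring

/-- The shifted quotient. -/
def qdK (b : ℝ) (x y : ℂ) : ℂ := eb b (y + cb b - b * Complex.I) / eb b (y - x - cb b)

lemma qd_half_le {b : ℝ} (hb : 0 < b) (hb1 : b ≤ 1) : b ≤ b⁻¹ := by
  have : 1 ≤ b⁻¹ := (one_le_inv₀ hb).2 hb1
  linarith

lemma qdK_bound {b : ℝ} (hb : 0 < b) (hb1 : b ≤ 1) {x : ℂ} (hx1 : -((b + b⁻¹) / 2) < x.im)
    {s : ℝ} (hs1 : x.im < s) (hs2 : s < 0) : ∃ C : ℝ, 0 < C ∧ ∀ y ∈ qdStrip s (s + b),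
      ‖qdK b x y‖ ≤ C * Real.exp (-(2 * π * max y.re 0 * (b + b⁻¹ + x.im - b))) := by
  have hbb := qd_half_le hb hb1
  have hδ : ∃ δ : ℝ, 0 < δ ∧ δ ≤ -s ∧ δ ≤ s - x.im ∧ δ ≤ s + b⁻¹ ∧ δ ≤ b⁻¹ - s + x.im := by
    refine ⟨min (min (-s) (s - x.im)) (min (s + b⁻¹) (b⁻¹ - s + x.im)), ?_, ?_, ?_, ?_, ?_⟩
    · refine lt_min (lt_min ?_ ?_) (lt_min ?_ ?_) <;> linarith
    · exact (min_le_left _ _).trans (min_le_left _ _)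
    · exact (min_le_left _ _).trans (min_le_right _ _)
    · exact (min_le_right _ _).trans (min_le_left _ _)
    · exact (min_le_right _ _).trans (min_le_right _ _)
  obtain ⟨δ, hδ0, hδ1, hδ2, hδ3, hδ4⟩ := hδ
  obtain ⟨C, hC0, hC⟩ := eb_ratio_bound hb hδ0 (x + 2 * cb b - b * Complex.I)
  refine ⟨C, hC0, fun y hy => ?_⟩
  have e0 : ((b:ℂ) * Complex.I).im = b := by simp
  have e0' : ((b:ℂ) * Complex.I).re = 0 := by simp
  have e1 : (y + cb b - b * Complex.I).im = y.im + (b + b⁻¹) / 2 - b := by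
    rw [Complex.sub_im, Complex.add_im, cb_im, e0]
  have e2 : (y - x - cb b).im = y.im - x.im - (b + b⁻¹) / 2 := by
    rw [Complex.sub_im, Complex.sub_im, cb_im]
  have e3 : (y + cb b - b * Complex.I).re = y.re := by
    rw [Complex.sub_re, Complex.add_re, cb_re, e0']; ring
  have e4 : (x + 2 * cb b - b * Complex.I).im = b + b⁻¹ + x.im - b := by
    rw [Complex.sub_im, Complex.add_im, qd_im_two, cb_im, e0]; ring
  have := hC (y + cb b - b * Complex.I) (y - x - cb b) ?_ ?_ (by ring)
  · rw [e3, e4] at this; exact this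
  · rw [e1, abs_le]; constructor <;> linarith [hy.1, hy.2]
  · rw [e2, abs_le]; constructor <;> linarith [hy.1, hy.2]

lemma qdK_differentiableAt {b : ℝ} (hb : 0 < b) (hb1 : b ≤ 1) {x : ℂ}
    (hx1 : -((b + b⁻¹) / 2) < x.im) {s : ℝ} (hs1 : x.im < s) (hs2 : s < 0)
    {y : ℂ} (h1 : s ≤ y.im) (h2 : y.im ≤ s + b) : DifferentiableAt ℂ (qdK b x) y := by
  have hbb := qd_half_le hb hb1
  have e0 : ((b:ℂ) * Complex.I).im = b := by simp
  have e1 : (y + cb b - b * Complex.I).im = y.im + (b + b⁻¹) / 2 - b := by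
    rw [Complex.sub_im, Complex.add_im, cb_im, e0]
  have e2 : (y - x - cb b).im = y.im - x.im - (b + b⁻¹) / 2 := by
    rw [Complex.sub_im, Complex.sub_im, cb_im]
  have d1 : DifferentiableAt ℂ (fun y => eb b (y + cb b - b * Complex.I)) y :=
    DifferentiableAt.comp (f := fun y => y + cb b - b * Complex.I) y
      (eb_differentiableAt hb (by rw [e1, abs_lt]; constructor <;> linarith)) (by fun_prop)
  have d2 : DifferentiableAt ℂ (fun y => eb b (y - x - cb b)) y :=
    DifferentiableAt.comp (f := fun y => y - x - cb b) y
      (eb_differentiableAt hb (by rw [e2, abs_lt]; constructor <;> linarith)) (by fun_prop)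
  exact d1.div d2 (eb_ne _ _)

lemma qdK_low {b : ℝ} (hb : 0 < b) (hb1 : b ≤ 1) {x : ℂ} (hx1 : -((b + b⁻¹) / 2) < x.im)
    {y : ℂ} (h1 : x.im < y.im) (h2 : y.im < 0) :
    qdK b x y = (1 - Complex.exp (2 * π * b * y)) * qdH b x y := by
  have hbb := qd_half_le hb hb1
  have hb0 : (b:ℂ) ≠ 0 := by exact_mod_cast hb.ne'
  have hBB : (b:ℂ) * (b:ℂ)⁻¹ = 1 := mul_inv_cancel₀ hb0
  have e0 : ((b:ℂ) * Complex.I).im = b := by simp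
  have e1 : (y + cb b - b * Complex.I).im = y.im + (b + b⁻¹) / 2 - b := by
    rw [Complex.sub_im, Complex.add_im, cb_im, e0]
  have h := eb_step hb (z := y + cb b - b * Complex.I) (by rw [e1]; linarith)
    (by rw [e1]; linarith)
  have a1 : (2 * π * b * (y + cb b - b * Complex.I + cb b) : ℂ) =
      2 * π * b * y + 2 * π * Complex.I := by
    unfold cb
    linear_combination (2 * π * Complex.I) * hBB
  rw [a1, Complex.exp_add, Complex.exp_two_pi_mul_I, mul_one, sub_add_cancel] at h
  unfold qdK qdH
  rw [h, mul_div_assoc]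

lemma qdK_high {b : ℝ} (hb : 0 < b) (hb1 : b ≤ 1) {x : ℂ} (hx1 : -((b + b⁻¹) / 2) < x.im)
    {y : ℂ} (h1 : x.im < y.im) (h2 : y.im < 0) :
    qdK b x (y + b * Complex.I) = (1 - Complex.exp (2 * π * b * (y - x))) * qdH b x y := by
  have hbb := qd_half_le hb hb1
  have e2 : (y - x - cb b).im = y.im - x.im - (b + b⁻¹) / 2 := by
    rw [Complex.sub_im, Complex.sub_im, cb_im]
  have h := eb_step hb (z := y - x - cb b) (by rw [e2]; linarith) (by rw [e2]; linarith)
  rw [sub_add_cancel] at h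
  have hne := eb_ne b (y - x - cb b)
  rw [h] at hne
  have hne1 := left_ne_zero_of_mul hne
  have hne2 := right_ne_zero_of_mul hne
  unfold qdK qdH
  rw [h]
  have a1 : y + b * Complex.I + cb b - b * Complex.I = y + cb b := by ring
  have a2 : y + b * Complex.I - x - cb b = y - x - cb b + b * Complex.I := by ring
  rw [a1, a2]
  generalize 1 - Complex.exp (2 * π * b * (y - x)) = E1 at hne1 ⊢
  generalize eb b (y - x - cb b + b * Complex.I) = G1 at hne2 ⊢
  field_simp

lemma qdF_funeq {b : ℝ} (hb : 0 < b) (hb1 : b ≤ 1) {x : ℂ} (hx1 : -((b + b⁻¹) / 2) < x.im)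
    {s : ℝ} (hs1 : x.im < s) (hs2 : s < 0) {v : ℂ} (hv1 : 0 < v.im)
    (hv2 : v.im + b < b + b⁻¹ + x.im) :
    qdF b x s v * (1 - Complex.exp (2 * π * b * v)) =
      qdF b x s (v + b * Complex.I) * (1 - Complex.exp (2 * π * b * (v - x))) := by
  obtain ⟨C, hC0, hC⟩ := qdK_bound hb hb1 hx1 hs1 hs2
  have hπ : 0 < 2 * π := by have := Real.pi_pos; positivity
  have hvb : (v + b * Complex.I).im = v.im + b := by simp
  have i1 := qdF_integrable hb hx1 hs1 hs2 hv1 (by linarith)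
  have i2 := qdF_integrable hb hx1 hs1 hs2 (v := v + b * Complex.I) (by rw [hvb]; linarith)
    (by rw [hvb]; linarith)
  have key := qd_contour_shift
    (g := fun y => Complex.exp (-Complex.I * (2 * π * v) * y) * qdK b x y)
    (α := s) (β := s + b) (by linarith) ?_ ?_
  · have a1 : ∀ t : ℝ, Complex.exp (-Complex.I * (2 * π * v) * (t + s * Complex.I)) *
        qdK b x (t + s * Complex.I) =
        Complex.exp (-Complex.I * (2 * π * v) * (t + s * Complex.I)) *
          qdH b x (t + s * Complex.I) -
        Complex.exp (-Complex.I * (2 * π * (v + b * Complex.I)) * (t + s * Complex.I)) *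
          qdH b x (t + s * Complex.I) := by
      intro t
      rw [qdK_low hb hb1 hx1 (by rw [qd_line_im]; exact hs1) (by rw [qd_line_im]; exact hs2)]
      have : -Complex.I * (2 * π * (v + b * Complex.I)) * (t + s * Complex.I) =
          -Complex.I * (2 * π * v) * (t + s * Complex.I) + 2 * π * b * (t + s * Complex.I) := by
        linear_combination (-2 * π * b * (t + s * Complex.I)) * Complex.I_sq
      rw [this, Complex.exp_add]
      ring
    have a2 : ∀ t : ℝ,
        Complex.exp (-Complex.I * (2 * π * v) * (t + ((s + b : ℝ) : ℂ) * Complex.I)) *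
        qdK b x (t + ((s + b : ℝ) : ℂ) * Complex.I) =
        Complex.exp (2 * π * b * v) *
        (Complex.exp (-Complex.I * (2 * π * v) * (t + s * Complex.I)) *
          qdH b x (t + s * Complex.I)) -
        Complex.exp (2 * π * b * (v - x)) *
        (Complex.exp (-Complex.I * (2 * π * (v + b * Complex.I)) * (t + s * Complex.I)) *
          qdH b x (t + s * Complex.I)) := by
      intro t
      have e : (t + ((s + b : ℝ) : ℂ) * Complex.I) = (t + s * Complex.I) + b * Complex.I := by
        push_cast; ring
      rw [e, qdK_high hb hb1 hx1 (by rw [qd_line_im]; exact hs1) (by rw [qd_line_im]; exact hs2)]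
      have e1 : -Complex.I * (2 * π * (v + b * Complex.I)) * (t + s * Complex.I) =
          -Complex.I * (2 * π * v) * (t + s * Complex.I) + 2 * π * b * (t + s * Complex.I) := by
        linear_combination (-2 * π * b * (t + s * Complex.I)) * Complex.I_sq
      have e2 : -Complex.I * (2 * π * v) * (t + s * Complex.I + b * Complex.I) =
          2 * π * b * v + -Complex.I * (2 * π * v) * (t + s * Complex.I) := by
        linear_combination (-2 * π * b * v) * Complex.I_sq
      have e3 : Complex.exp (2 * π * b * v) * Complex.exp (2 * π * b * (t + s * Complex.I - x)) =
          Complex.exp (2 * π * b * (v - x)) * Complex.exp (2 * π * b * (t + s * Complex.I)) := by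
        rw [← Complex.exp_add, ← Complex.exp_add]
        congr 1; ring
      rw [e1, e2, Complex.exp_add, Complex.exp_add]
      linear_combination (-Complex.exp (-Complex.I * (2 * π * v) * (t + s * Complex.I)) *
        qdH b x (t + s * Complex.I)) * e3
    simp only [a1, a2] at key
    rw [integral_sub i1 i2, integral_sub (i1.const_mul _) (i2.const_mul _), integral_const_mul,
      integral_const_mul] at key
    change qdF b x s v - qdF b x s (v + b * Complex.I) = _ * qdF b x s v -
      _ * qdF b x s (v + b * Complex.I) at key
    linear_combination key
  · intro y hy
    refine DifferentiableAt.differentiableWithinAt ?_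
    exact DifferentiableAt.mul (by fun_prop)
      (qdK_differentiableAt hb hb1 hx1 hs1 hs2 hy.1 hy.2)
  · refine qdDecay_kernel (C := C) (p := 2 * π * (b + b⁻¹ + x.im - b)) (q := 0) (T := 0)
      ?_ ?_ ?_ ?_
    · intro y hy _ h0
      have := hC y hy
      rw [max_eq_left h0] at this
      convert this using 3
      ring
    · intro y hy _ h0
      have := hC y hy
      rw [max_eq_right h0] at this
      convert this using 3
      ring
    · rw [qd_im_twopi, neg_zero]; positivity
    · rw [qd_im_twopi]; gcongr; linarith

/-- The ratio of the two sides. -/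
def qdR (b : ℝ) (x : ℂ) (s : ℝ) (u : ℂ) : ℂ :=
  qdF b x s (u + cb b) * (eb b u / eb b (u - x))

lemma qdR_per {b : ℝ} (hb : 0 < b) (hb1 : b ≤ 1) {x : ℂ} (hx1 : -((b + b⁻¹) / 2) < x.im)
    {s : ℝ} (hs1 : x.im < s) (hs2 : s < 0) {u : ℂ} (hu1 : -((b + b⁻¹) / 2) < u.im)
    (hu2 : u.im + b < (b + b⁻¹) / 2 + x.im) : qdR b x s (u + b * Complex.I) = qdR b x s u := by
  have hv : (u + cb b).im = u.im + (b + b⁻¹) / 2 := by rw [Complex.add_im, cb_im]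
  have h := qdF_funeq hb hb1 hx1 hs1 hs2 (v := u + cb b) (by rw [hv]; linarith)
    (by rw [hv]; linarith)
  have s1 := eb_step hb hu1 (by linarith)
  have s2 := eb_step hb (z := u - x) (by rw [Complex.sub_im]; linarith)
    (by rw [Complex.sub_im]; linarith)
  have hne := eb_ne b (u - x)
  rw [s2] at hne
  have hne1 := left_ne_zero_of_mul hne
  have hne2 := right_ne_zero_of_mul hne
  have a1 : u + cb b - x = u - x + cb b := by ring
  have a2 : u + b * Complex.I + cb b = u + cb b + b * Complex.I := by ring
  have a3 : u + b * Complex.I - x = u - x + b * Complex.I := by ring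
  unfold qdR
  rw [a2, a3, s1, s2]
  rw [a1] at h
  generalize qdF b x s (u + cb b + b * Complex.I) = F1 at h ⊢
  generalize qdF b x s (u + cb b) = F0 at h ⊢
  generalize 1 - Complex.exp (2 * π * b * (u - x + cb b)) = E1 at h hne1 ⊢
  generalize 1 - Complex.exp (2 * π * b * (u + cb b)) = E0 at h ⊢
  generalize eb b (u - x + b * Complex.I) = G1 at hne2 ⊢
  generalize eb b (u + b * Complex.I) = G0
  field_simp
  linear_combination -G0 * h

lemma qdR_const {b : ℝ} (hb : 0 < b) (hb1 : b ≤ 1) {x : ℂ} (hx1 : -((b + b⁻¹) / 2) < x.im)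
    {s : ℝ} (hs1 : x.im < s) (hs2 : s < 0) {u v : ℂ}
    (hu : -((b + b⁻¹) / 2) < u.im ∧ u.im < (b + b⁻¹) / 2 + x.im)
    (hv : -((b + b⁻¹) / 2) < v.im ∧ v.im < (b + b⁻¹) / 2 + x.im) :
    qdR b x s u = qdR b x s v := by
  have hbb := qd_half_le hb hb1
  have hπ := Real.pi_pos
  have him : ∀ u : ℂ, (u + cb b).im = u.im + (b + b⁻¹) / 2 := by
    intro u; rw [Complex.add_im, cb_im]
  have hre : ∀ u : ℂ, (u + cb b).re = u.re := by
    intro u; rw [Complex.add_re, cb_re, add_zero]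
  refine qd_periodic_const (b := b) (κ := 2 * π * (-x.im)) hb (by linarith) ?_
    (fun u h1 h2 => qdR_per hb hb1 hx1 hs1 hs2 h1 h2) ?_ ?_ ?_ hu hv
  · intro u hu
    refine DifferentiableAt.differentiableWithinAt ?_
    have d1 : DifferentiableAt ℂ (fun u => qdF b x s (u + cb b)) u :=
      DifferentiableAt.comp (f := fun u => u + cb b) u
        (qdF_differentiableAt hb hx1 hs1 hs2 (by rw [him]; linarith [hu.1])
          (by rw [him]; linarith [hu.2])) (by fun_prop)
    have d2 : DifferentiableAt ℂ (eb b) u :=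
      eb_differentiableAt hb (by rw [abs_lt]; constructor <;> linarith [hu.1, hu.2])
    have d3 : DifferentiableAt ℂ (fun u => eb b (u - x)) u :=
      DifferentiableAt.comp (f := fun u => u - x) u
        (eb_differentiableAt hb (by rw [Complex.sub_im, abs_lt]; constructor <;>
          linarith [hu.1, hu.2])) (by fun_prop)
    exact d1.mul (d2.div d3 (eb_ne _ _))
  · have h1 : -x.im < b⁻¹ := by linarith
    calc 2 * π * (-x.im) < 2 * π * b⁻¹ := by gcongr
      _ = _ := by rw [div_eq_mul_inv]; ring
  · intro α β hα hβ
    obtain ⟨C1, hC1, hF⟩ := qdF_bound hb hx1 hs1 hs2 (α := α + (b + b⁻¹) / 2)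
      (β := β + (b + b⁻¹) / 2) (by linarith) (by linarith)
    have hδ : ∃ δ : ℝ, 0 < δ ∧ δ ≤ (b + b⁻¹) / 2 + α ∧ δ ≤ (b + b⁻¹) / 2 + x.im - β ∧
        δ ≤ -x.im := by
      refine ⟨min (min ((b + b⁻¹) / 2 + α) ((b + b⁻¹) / 2 + x.im - β)) (-x.im), ?_, ?_, ?_, ?_⟩
      · refine lt_min (lt_min ?_ ?_) ?_ <;> linarith
      · exact (min_le_left _ _).trans (min_le_left _ _)
      · exact (min_le_left _ _).trans (min_le_right _ _)
      · exact min_le_right _ _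
    obtain ⟨δ, hδ0, hδ1, hδ2, hδ3⟩ := hδ
    obtain ⟨C2, hC2, hG⟩ := eb_ratio_bound hb hδ0 x
    refine ⟨C1 * C2, by positivity, fun u h1 h2 => ?_⟩
    have f1 := hF (u + cb b) (by rw [him]; linarith) (by rw [him]; linarith)
    have f2 := hG u (u - x) (by rw [abs_le]; constructor <;> linarith)
      (by rw [Complex.sub_im, abs_le]; constructor <;> linarith) (by ring)
    rw [hre] at f1
    unfold qdR
    rw [norm_mul]
    calc _ ≤ (C1 * Real.exp (2 * π * s * u.re)) *
          (C2 * Real.exp (-(2 * π * max u.re 0 * x.im))) := by gcongr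
      _ = C1 * C2 * Real.exp (2 * π * s * u.re + -(2 * π * max u.re 0 * x.im)) := by
          rw [Real.exp_add]; ring
      _ ≤ _ := by
          refine mul_le_mul_of_nonneg_left (Real.exp_le_exp.2 ?_) (by positivity)
          have key : s * u.re - max u.re 0 * x.im ≤ -x.im * |u.re| := by
            rcases le_total u.re 0 with h0 | h0
            · rw [max_eq_right h0, abs_of_nonpos h0]; nlinarith
            · rw [max_eq_left h0, abs_of_nonneg h0]; nlinarith
          have := mul_le_mul_of_nonneg_left key (by positivity : 0 ≤ 2 * π)
          linarith
  · exact mul_nonneg (by positivity) (by linarith)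

lemma eb_tendsto_one {b : ℝ} (hb : 0 < b) {a : ℂ} (ha : |a.im| < (b + b⁻¹) / 2) :
    Tendsto (fun t : ℝ => eb b (t + a)) atBot (𝓝 1) := by
  obtain ⟨C, hC0, hC⟩ := qdL_bound hb (δ := (b + b⁻¹) / 2 - |a.im|) (by linarith)
  have h0 : Tendsto (fun t : ℝ => qdL b (t + a)) atBot (𝓝 0) := by
    have hb1 : ∀ t : ℝ, ‖qdL b (t + a)‖ ≤ C * Real.exp (2 * qdEps b * (t + a.re)) := by
      intro t
      have e1 : ((t:ℂ) + a).im = a.im := by simp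
      have e2 : ((t:ℂ) + a).re = t + a.re := by simp
      have := hC (t + a) (by rw [e1]; linarith)
      rwa [e2] at this
    refine squeeze_zero_norm hb1 ?_
    have ht : Tendsto (fun t : ℝ => 2 * qdEps b * (t + a.re)) atBot atBot := by
      have := qdEps_pos hb
      refine Tendsto.const_mul_atBot (by positivity) ?_
      exact tendsto_atBot_add_const_right _ _ tendsto_id
    have := (Real.tendsto_exp_atBot.comp ht).const_mul C
    simpa using this
  have h1 : Tendsto (fun t : ℝ => Complex.exp (qdL b (t + a))) atBot (𝓝 (Complex.exp 0)) :=
    (Complex.continuous_exp.tendsto _).comp h0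
  rw [Complex.exp_zero] at h1
  exact h1

lemma qdH_tendsto_one {b : ℝ} (hb : 0 < b) {x : ℂ} (hx1 : -((b + b⁻¹) / 2) < x.im) {s : ℝ}
    (hs1 : x.im < s) (hs2 : s < 0) :
    Tendsto (fun t : ℝ => qdH b x (t + s * Complex.I)) atBot (𝓝 1) := by
  have e0 : ((s:ℂ) * Complex.I).im = s := by simp
  have h1 := eb_tendsto_one hb (a := s * Complex.I + cb b)
    (by rw [Complex.add_im, cb_im, e0, abs_lt]; constructor <;> linarith)
  have h2 := eb_tendsto_one hb (a := s * Complex.I - x - cb b)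
    (by rw [Complex.sub_im, Complex.sub_im, cb_im, e0, abs_lt]; constructor <;> linarith)
  have h3 := h1.div h2 one_ne_zero
  rw [div_one] at h3
  refine h3.congr fun t => ?_
  unfold qdH
  simp only [Pi.div_apply]
  congr 2 <;> ring

/-- The behaviour of the Fourier integral at the edge. -/
lemma qdF_limit {b : ℝ} (hb : 0 < b) {x : ℂ} (hx1 : -((b + b⁻¹) / 2) < x.im) {s : ℝ}
    (hs1 : x.im < s) (hs2 : s < 0) :
    Tendsto (fun η : ℝ => (η:ℂ) * qdF b x s (η * Complex.I)) (𝓝[>] 0) (𝓝 ((2 * π : ℂ)⁻¹)) := by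
  obtain ⟨C, hC0, hp, hq⟩ := qdH_line hb hx1 hs1 hs2
  have hπ := Real.pi_pos
  have hb' := inv_pos.2 hb
  set p := b + b⁻¹ + x.im with hpdef
  have hp0 : 0 < p := by linarith
  set Φ : ℝ → ℝ → ℂ := fun η τ => Complex.exp (2 * π * τ) *
    qdH b x (((η⁻¹ * τ : ℝ) : ℂ) + s * Complex.I) with hΦ
  have hinv : Tendsto (fun η : ℝ => η⁻¹) (𝓝[>] 0) atTop := tendsto_inv_nhdsGT_zero
  have hDCT : Tendsto (fun η : ℝ => ∫ τ : ℝ, Φ η τ) (𝓝[>] 0)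
      (𝓝 (∫ τ : ℝ, (Set.Iic (0:ℝ)).indicator (fun τ : ℝ => Complex.exp ((2 * π : ℂ) * τ)) τ)) := by
    refine tendsto_integral_filter_of_dominated_convergence
      (fun τ => C * Real.exp (-(2 * π) * |τ|)) ?_ ?_ ?_ ?_
    · refine Eventually.of_forall fun η => Continuous.aestronglyMeasurable ?_
      have := (qdH_cont hb hx1 hs1 hs2).comp (continuous_const_mul η⁻¹)
      exact Continuous.mul (by fun_prop) this
    · have hev : ∀ᶠ η : ℝ in 𝓝[>] 0, 2 * p⁻¹ ≤ η⁻¹ := hinv.eventually_ge_atTop _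
      have hev2 : ∀ᶠ η : ℝ in 𝓝[>] 0, 0 < η := self_mem_nhdsWithin
      filter_upwards [hev, hev2] with η h1 h2
      refine Eventually.of_forall fun τ => ?_
      have hi : 0 < η⁻¹ := inv_pos.2 h2
      have hn : ‖Complex.exp (2 * π * τ)‖ = Real.exp (2 * π * τ) := by
        rw [Complex.norm_exp]; congr 1
        rw [qd_re_twopi, Complex.ofReal_re]
      simp only [hΦ]
      rw [norm_mul, hn]
      rcases le_total τ 0 with h0 | h0
      · have := hq (η⁻¹ * τ) (mul_nonpos_of_nonneg_of_nonpos hi.le h0)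
        rw [zero_mul, Real.exp_zero, mul_one] at this
        rw [abs_of_nonpos h0, neg_mul_neg, mul_comm C]
        gcongr
      · have := hp (η⁻¹ * τ) (mul_nonneg hi.le h0)
        rw [abs_of_nonneg h0]
        calc _ ≤ Real.exp (2 * π * τ) * (C * Real.exp (-(2 * π * p) * (η⁻¹ * τ))) := by gcongr
          _ = C * Real.exp (2 * π * τ + -(2 * π * p) * (η⁻¹ * τ)) := by rw [Real.exp_add]; ring
          _ ≤ _ := by
            refine mul_le_mul_of_nonneg_left (Real.exp_le_exp.2 ?_) hC0.le
            have h3 : 2 ≤ p * η⁻¹ := by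
              have := mul_le_mul_of_nonneg_left h1 hp0.le
              calc (2:ℝ) = p * (2 * p⁻¹) := by field_simp
                _ ≤ _ := this
            have h4 := mul_le_mul_of_nonneg_left h3 (by positivity : 0 ≤ 2 * π * τ)
            linarith
    · exact (qd_integrable_exp_abs (by positivity : 0 < 2 * π)).const_mul C
    · have hae : ∀ᵐ τ : ℝ, τ ≠ 0 := by simp [ae_iff]
      filter_upwards [hae] with τ hτ
      rcases lt_or_gt_of_ne hτ with h0 | h0
      · rw [Set.indicator_of_mem (Set.mem_Iic.2 h0.le)]
        have ht : Tendsto (fun η : ℝ => η⁻¹ * τ) (𝓝[>] 0) atBot := hinv.atTop_mul_const_of_neg h0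
        have := ((qdH_tendsto_one hb hx1 hs1 hs2).comp ht).const_mul
          (Complex.exp ((2 * π : ℂ) * τ))
        rw [mul_one] at this
        exact this
      · rw [Set.indicator_of_notMem (by rw [Set.mem_Iic, not_le]; exact h0)]
        have ht : Tendsto (fun η : ℝ => η⁻¹ * τ) (𝓝[>] 0) atTop := hinv.atTop_mul_const h0
        have hz : Tendsto (fun t : ℝ => qdH b x (t + s * Complex.I)) atTop (𝓝 0) := by
          refine squeeze_zero_norm' (a := fun t => C * Real.exp (-(2 * π * p) * t)) ?_ ?_
          · filter_upwards [eventually_ge_atTop 0] with t ht using hp t ht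
          · have : Tendsto (fun t : ℝ => -(2 * π * p) * t) atTop atBot :=
              Tendsto.const_mul_atTop_of_neg (by
                have : 0 < 2 * π * p := by positivity
                linarith) tendsto_id
            have := (Real.tendsto_exp_atBot.comp this).const_mul C
            simpa using this
        have := (hz.comp ht).const_mul (Complex.exp ((2 * π : ℂ) * τ))
        rw [mul_zero] at this
        exact this
  have hval : (∫ τ : ℝ, (Set.Iic (0:ℝ)).indicator
      (fun τ : ℝ => Complex.exp ((2 * π : ℂ) * τ)) τ) = (2 * π : ℂ)⁻¹ := by
    rw [integral_indicator measurableSet_Iic, integral_exp_mul_complex_Iic (by simp [hπ])]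
    simp
  rw [hval] at hDCT
  have hph : Tendsto (fun η : ℝ => Complex.exp (2 * π * η * s * Complex.I)) (𝓝[>] 0) (𝓝 1) := by
    have : Continuous fun η : ℝ => Complex.exp (2 * π * η * s * Complex.I) := by fun_prop
    have h := (this.tendsto 0).mono_left (nhdsWithin_le_nhds (s := Set.Ioi 0))
    simpa using h
  have hfin := hph.mul hDCT
  rw [one_mul] at hfin
  refine hfin.congr' ?_
  have hev2 : ∀ᶠ η : ℝ in 𝓝[>] 0, 0 < η := self_mem_nhdsWithin
  filter_upwards [hev2] with η hη
  have hη0 : (η:ℂ) ≠ 0 := by exact_mod_cast hη.ne'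
  have hc := Measure.integral_comp_mul_left (Φ η) η
  have hpt : ∀ t : ℝ, Complex.exp (-Complex.I * (2 * π * (η * Complex.I)) * (t + s * Complex.I)) *
      qdH b x (t + s * Complex.I) = Complex.exp (2 * π * η * s * Complex.I) * Φ η (η * t) := by
    intro t
    have e1 : η⁻¹ * (η * t) = t := by field_simp
    have e2 : -Complex.I * (2 * π * (η * Complex.I)) * (t + s * Complex.I) =
        2 * π * η * s * Complex.I + 2 * π * ((η * t : ℝ) : ℂ) := by
      push_cast
      linear_combination (-2 * π * η * (t + s * Complex.I)) * Complex.I_sq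
    simp only [hΦ]
    rw [e1, e2, Complex.exp_add, mul_assoc]
  unfold qdF
  simp only [hpt]
  rw [integral_const_mul, hc, abs_of_pos (inv_pos.2 hη), Complex.real_smul, Complex.ofReal_inv]
  field_simp

lemma qd_slope (a : ℂ) : Tendsto (fun η : ℝ => (η:ℂ)⁻¹ * (1 - Complex.exp (a * η))) (𝓝[>] 0)
    (𝓝 (-a)) := by
  have h1 : HasDerivAt (fun η : ℝ => 1 - Complex.exp (a * η)) (-a) 0 := by
    have h2 : HasDerivAt (fun η : ℝ => a * (η:ℂ)) (a * 1) 0 :=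
      (Complex.ofRealCLM.hasDerivAt (x := (0:ℝ))).const_mul a
    have h3 := h2.cexp.const_sub 1
    refine h3.congr_deriv ?_
    simp
  have h2 := h1.tendsto_slope_zero_right
  refine h2.congr fun η => ?_
  simp

lemma eb_tendsto_line {b : ℝ} (hb : 0 < b) {a : ℂ} (ha : |a.im| < (b + b⁻¹) / 2) (σ : ℝ) :
    Tendsto (fun η : ℝ => eb b (a + σ * η * Complex.I)) (𝓝[>] 0) (𝓝 (eb b a)) := by
  have h1 : ContinuousAt (eb b) (a + σ * ((0:ℝ):ℂ) * Complex.I) := by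
    have : a + σ * ((0:ℝ):ℂ) * Complex.I = a := by simp
    rw [this]
    exact (eb_differentiableAt hb ha).continuousAt
  have h2 : ContinuousAt (fun η : ℝ => eb b (a + σ * η * Complex.I)) 0 :=
    ContinuousAt.comp (f := fun η : ℝ => a + σ * η * Complex.I) h1 (by fun_prop)
  have h3 := h2.tendsto.mono_left (nhdsWithin_le_nhds (s := Set.Ioi 0))
  simpa using h3

lemma cb_inv (b : ℝ) : cb b⁻¹ = cb b := by
  unfold cb
  push_cast
  rw [inv_inv]
  ring

/-- Relation between the values at `z₀ = i(b-b⁻¹)/2` and `-z₀`. -/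
lemma eb_z0_neg {b : ℝ} (hb : 0 < b) :
    eb b (cb b - b * Complex.I) = (b:ℂ) ^ 2 * eb b (-(cb b - b * Complex.I)) ∨
    eb b (cb b - b * Complex.I) = (b:ℂ) ^ 2 * eb b (cb b - (b:ℂ)⁻¹ * Complex.I) := by
  right
  have hb' := inv_pos.2 hb
  have hπ := Real.pi_pos
  have hb0 : (b:ℂ) ≠ 0 := by exact_mod_cast hb.ne'
  have hBB : (b:ℂ) * (b:ℂ)⁻¹ = 1 := mul_inv_cancel₀ hb0
  have key : ∀ {b : ℝ}, 0 < b → ∀ {η : ℝ}, 0 < η → η < b⁻¹ →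
      eb b (cb b - b * Complex.I + ((-1:ℝ):ℂ) * η * Complex.I) =
        (1 - Complex.exp ((-2 * π * b * Complex.I) * η)) * eb b (cb b - η * Complex.I) := by
    intro b hb η h1 h2
    have hb0 : (b:ℂ) ≠ 0 := by exact_mod_cast hb.ne'
    have hBB : (b:ℂ) * (b:ℂ)⁻¹ = 1 := mul_inv_cancel₀ hb0
    have him : (cb b - b * Complex.I + ((-1:ℝ):ℂ) * η * Complex.I).im =
        (b + b⁻¹) / 2 - b - η := by
      rw [Complex.add_im, Complex.sub_im, cb_im]; simp; ring
    have h := eb_step hb (z := cb b - b * Complex.I + ((-1:ℝ):ℂ) * η * Complex.I)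
      (by rw [him]; linarith) (by rw [him]; linarith)
    have a1 : cb b - b * Complex.I + ((-1:ℝ):ℂ) * η * Complex.I + b * Complex.I =
        cb b - η * Complex.I := by push_cast; ring
    have a2 : 2 * π * b * (cb b - b * Complex.I + ((-1:ℝ):ℂ) * η * Complex.I + cb b) =
        (-2 * π * b * Complex.I) * η + 2 * π * Complex.I := by
      unfold cb; push_cast
      linear_combination (2 * π * Complex.I) * hBB
    rw [a1, a2, Complex.exp_add, Complex.exp_two_pi_mul_I, mul_one] at h
    exact h
  have e1 : (cb b - b * Complex.I).im = (b + b⁻¹) / 2 - b := by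
    rw [Complex.sub_im, cb_im]; simp
  have e2 : (cb b - (b:ℂ)⁻¹ * Complex.I).im = (b + b⁻¹) / 2 - b⁻¹ := by
    rw [Complex.sub_im, cb_im, ← Complex.ofReal_inv, Complex.im_ofReal_mul]; simp
  have l1 := (eb_tendsto_line hb (a := cb b - b * Complex.I)
    (by rw [e1, abs_lt]; constructor <;> linarith) (-1)).mul (qd_slope (-2 * π * (b:ℂ)⁻¹ * Complex.I))
  have l2 := (eb_tendsto_line hb (a := cb b - (b:ℂ)⁻¹ * Complex.I)
    (by rw [e2, abs_lt]; constructor <;> linarith) (-1)).mul (qd_slope (-2 * π * b * Complex.I))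
  have heq : ∀ᶠ η : ℝ in 𝓝[>] 0,
      eb b (cb b - b * Complex.I + ((-1:ℝ):ℂ) * η * Complex.I) *
        ((η:ℂ)⁻¹ * (1 - Complex.exp ((-2 * π * (b:ℂ)⁻¹ * Complex.I) * η))) =
      eb b (cb b - (b:ℂ)⁻¹ * Complex.I + ((-1:ℝ):ℂ) * η * Complex.I) *
        ((η:ℂ)⁻¹ * (1 - Complex.exp ((-2 * π * b * Complex.I) * η))) := by
    have h1 : ∀ᶠ η : ℝ in 𝓝[>] 0, 0 < η := self_mem_nhdsWithin
    have h2 : ∀ᶠ η : ℝ in 𝓝[>] 0, η < b := nhdsWithin_le_nhds (Iio_mem_nhds hb)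
    have h3 : ∀ᶠ η : ℝ in 𝓝[>] 0, η < b⁻¹ := nhdsWithin_le_nhds (Iio_mem_nhds hb')
    filter_upwards [h1, h2, h3] with η h1 h2 h3
    have k1 := key hb h1 h3
    have k2 := key hb' h1 (by rw [inv_inv]; exact h2)
    simp only [eb_inv, cb_inv, Complex.ofReal_inv] at k2
    rw [k1, k2]
    ring
  have h := tendsto_nhds_unique (l1.congr' heq) l2
  have hne : (2 * π * Complex.I : ℂ) ≠ 0 := by simp [Real.pi_ne_zero]
  apply mul_left_cancel₀ hne
  linear_combination (b:ℂ) * h - (2 * π * Complex.I) * eb b (cb b - b * Complex.I) * hBB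

lemma qdD_conj (b : ℝ) (w : ℂ) : (starRingEnd ℂ) (qdD b w) = qdD b ((starRingEnd ℂ) w) := by
  unfold qdD
  rw [map_inv₀, map_mul, map_mul, ← Complex.sinh_conj, ← Complex.sinh_conj, map_mul, map_mul,
    map_inv₀, Complex.conj_ofReal]

lemma qdL_conj (b y : ℝ) : (starRingEnd ℂ) (qdL b (y * Complex.I)) = - qdL b (-(y * Complex.I)) := by
  have c2 : (starRingEnd ℂ) (2:ℂ) = 2 := map_ofNat _ 2
  have c4 : (starRingEnd ℂ) (4:ℂ) = 4 := map_ofNat _ 4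
  rw [qdL_neg, neg_neg, qdL_eq, map_mul, ← integral_conj]
  congr 1
  · simp [c4]
  · congr 1
    funext t
    rw [map_mul, qdD_conj, ← Complex.exp_conj]
    congr 1
    · congr 1
      simp only [map_mul, map_add, map_neg, Complex.conj_I, Complex.conj_ofReal]
      push_cast
      simp [c2]
    · simp

/-- The value of `e_b` at `i(b-b⁻¹)/2`. -/
lemma eb_z0 {b : ℝ} (hb : 0 < b) :
    -Complex.I * b * eb b (-cb b + b * Complex.I) * zeta0 b = 1 := by
  have hb' := inv_pos.2 hb
  have hb0 : (b:ℂ) ≠ 0 := by exact_mod_cast hb.ne'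
  have hBB : (b:ℂ) * (b:ℂ)⁻¹ = 1 := mul_inv_cancel₀ hb0
  set y : ℝ := (b - b⁻¹) / 2 with hy
  have e1 : -cb b + b * Complex.I = y * Complex.I := by
    unfold cb; rw [hy]; push_cast; ring
  have e2 : cb b - b * Complex.I = -(y * Complex.I) := by
    unfold cb; rw [hy]; push_cast; ring
  have e3 : cb b - (b:ℂ)⁻¹ * Complex.I = y * Complex.I := by
    unfold cb; rw [hy]; push_cast; ring
  have h1 : eb b (-(y * Complex.I)) = (b:ℂ) ^ 2 * eb b (y * Complex.I) := by
    rcases eb_z0_neg hb with h | h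
    · rw [e2, neg_neg] at h; exact h
    · rw [e2, e3] at h; exact h
  have h2 := qdL_inversion hb (z := y * Complex.I) (by
    have : ((y:ℂ) * Complex.I).im = y := by simp
    rw [this, hy, abs_lt]; constructor <;> linarith)
  have h3 := qdL_conj b y
  set L := qdL b (y * Complex.I) with hL
  have h4 : qdL b (-(y * Complex.I)) = -(starRingEnd ℂ) L := by rw [h3, neg_neg]
  rw [h4] at h2
  have h5 : (b * Real.exp L.re) ^ 2 = 1 := by
    rw [eb_eq, eb_eq, h4, ← hL] at h1
    have n1 := congrArg norm h1
    rw [norm_mul, Complex.norm_exp, Complex.norm_exp, norm_pow, Complex.norm_real, Real.norm_eq_abs,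
      sq_abs, Complex.neg_re, Complex.conj_re] at n1
    have : Real.exp (-L.re) * Real.exp L.re = 1 := by rw [← Real.exp_add]; simp
    rw [n1] at this
    linear_combination this
  have h6 : b * Real.exp L.re = 1 := by
    have hpos : 0 < b * Real.exp L.re := mul_pos hb (Real.exp_pos _)
    nlinarith
  have h6C : (b:ℂ) * Complex.exp (L.re : ℂ) = 1 := by
    rw [← Complex.ofReal_exp]; exact_mod_cast h6
  have h7 : L + -(starRingEnd ℂ) L = 2 * L.im * Complex.I := by
    apply Complex.ext <;> simp; ring
  rw [h7] at h2
  have h8 : L = L.re + π * Complex.I * (1 / 4 - ((b:ℂ) ^ 2 + ((b:ℂ)⁻¹) ^ 2) / 12) := by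
    have h9 := Complex.re_add_im L
    have hy2 : ((y:ℂ) * Complex.I) ^ 2 = -((b:ℂ) ^ 2 + ((b:ℂ)⁻¹) ^ 2 - 2) / 4 := by
      rw [mul_pow, Complex.I_sq, hy]; push_cast
      linear_combination (1 / 2 : ℂ) * hBB
    rw [hy2] at h2
    linear_combination (1 / 2 : ℂ) * h2 - h9
  have h10 : zeta0 b = Complex.exp (π * Complex.I * (1 / 4 + ((b:ℂ) ^ 2 + ((b:ℂ)⁻¹) ^ 2) / 12)) := by
    unfold zeta0 cb
    congr 1
    linear_combination (-π * Complex.I * ((b:ℂ) + (b:ℂ)⁻¹) ^ 2 / 12) * Complex.I_sq +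
      (π * Complex.I / 6) * hBB
  rw [e1, eb_eq, ← hL, h8, h10, Complex.exp_add]
  have h11 : Complex.exp (π * Complex.I * (1 / 4 - ((b:ℂ) ^ 2 + ((b:ℂ)⁻¹) ^ 2) / 12)) *
      Complex.exp (π * Complex.I * (1 / 4 + ((b:ℂ) ^ 2 + ((b:ℂ)⁻¹) ^ 2) / 12)) = Complex.I := by
    have h12 : (π * Complex.I * (1 / 4 - ((b:ℂ) ^ 2 + ((b:ℂ)⁻¹) ^ 2) / 12)) +
      (π * Complex.I * (1 / 4 + ((b:ℂ) ^ 2 + ((b:ℂ)⁻¹) ^ 2) / 12)) = π / 2 * Complex.I := by ring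
    rw [← Complex.exp_add, h12, Complex.exp_pi_div_two_mul_I]
  calc _ = -Complex.I * ((b:ℂ) * Complex.exp (L.re : ℂ)) *
      (Complex.exp (π * Complex.I * (1 / 4 - ((b:ℂ) ^ 2 + ((b:ℂ)⁻¹) ^ 2) / 12)) *
      Complex.exp (π * Complex.I * (1 / 4 + ((b:ℂ) ^ 2 + ((b:ℂ)⁻¹) ^ 2) / 12))) := by ring
    _ = 1 := by rw [h6C, h11]; linear_combination -Complex.I_sq

lemma qdR_value {b : ℝ} (hb : 0 < b) (hb1 : b ≤ 1) {x : ℂ} (hx1 : -((b + b⁻¹) / 2) < x.im)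
    {s : ℝ} (hs1 : x.im < s) (hs2 : s < 0) {u : ℂ}
    (hu : -((b + b⁻¹) / 2) < u.im ∧ u.im < (b + b⁻¹) / 2 + x.im) :
    qdR b x s u = (zeta0 b)⁻¹ / eb b (-x - cb b) := by
  have hb' := inv_pos.2 hb
  have hbb := qd_half_le hb hb1
  have hπ : (π:ℂ) ≠ 0 := by exact_mod_cast Real.pi_ne_zero
  have him1 : (-cb b + b * Complex.I).im = -((b + b⁻¹) / 2) + b := by
    rw [Complex.add_im, Complex.neg_im, cb_im]; simp
  have him2 : (-x - cb b).im = -x.im - (b + b⁻¹) / 2 := by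
    rw [Complex.sub_im, Complex.neg_im, cb_im]
  have l1 := qdF_limit hb hx1 hs1 hs2
  have l2 := qd_slope (2 * π * b * Complex.I)
  have l3 := eb_tendsto_line hb (a := -cb b + b * Complex.I)
    (by rw [him1, abs_lt]; constructor <;> linarith) 1
  have l4 := eb_tendsto_line hb (a := -x - cb b)
    (by rw [him2, abs_lt]; constructor <;> linarith) 1
  have l5 : Tendsto (fun η : ℝ => (η:ℂ) * qdF b x s (η * Complex.I) *
      ((η:ℂ)⁻¹ * (1 - Complex.exp (2 * π * b * Complex.I * η))) *
      (eb b (-cb b + b * Complex.I + ((1:ℝ):ℂ) * η * Complex.I) /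
      eb b (-x - cb b + ((1:ℝ):ℂ) * η * Complex.I))) (𝓝[>] 0)
      (𝓝 ((2 * π : ℂ)⁻¹ * (-(2 * π * b * Complex.I)) *
        (eb b (-cb b + b * Complex.I) / eb b (-x - cb b)))) :=
    (l1.mul l2).mul (l3.div l4 (eb_ne _ _))
  have heq : ∀ᶠ η : ℝ in 𝓝[>] 0, (η:ℂ) * qdF b x s (η * Complex.I) *
      ((η:ℂ)⁻¹ * (1 - Complex.exp (2 * π * b * Complex.I * η))) *
      (eb b (-cb b + b * Complex.I + ((1:ℝ):ℂ) * η * Complex.I) /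
      eb b (-x - cb b + ((1:ℝ):ℂ) * η * Complex.I)) = qdR b x s u := by
    have h1 : ∀ᶠ η : ℝ in 𝓝[>] 0, 0 < η := self_mem_nhdsWithin
    have h2 : ∀ᶠ η : ℝ in 𝓝[>] 0, η < b⁻¹ := nhdsWithin_le_nhds (Iio_mem_nhds hb')
    have h3 : ∀ᶠ η : ℝ in 𝓝[>] 0, η < b + b⁻¹ + x.im :=
      nhdsWithin_le_nhds (Iio_mem_nhds (by linarith : 0 < b + b⁻¹ + x.im))
    filter_upwards [h1, h2, h3] with η h1 h2 h3
    have him3 : (-cb b + η * Complex.I).im = -((b + b⁻¹) / 2) + η := by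
      rw [Complex.add_im, Complex.neg_im, cb_im]; simp
    rw [qdR_const hb hb1 hx1 hs1 hs2 hu (v := -cb b + η * Complex.I)
      ⟨by rw [him3]; linarith, by rw [him3]; linarith⟩]
    have hst := eb_step hb (z := -cb b + η * Complex.I) (by rw [him3]; linarith)
      (by rw [him3]; linarith)
    have a1 : -cb b + η * Complex.I + cb b = η * Complex.I := by ring
    have a2 : -cb b + η * Complex.I + b * Complex.I =
        -cb b + b * Complex.I + ((1:ℝ):ℂ) * η * Complex.I := by push_cast; ring
    have a3 : -cb b + η * Complex.I - x = -x - cb b + ((1:ℝ):ℂ) * η * Complex.I := by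
      push_cast; ring
    have a4 : (2 * π * b * (η * Complex.I) : ℂ) = 2 * π * b * Complex.I * η := by ring
    have hη : (η:ℂ) * (η:ℂ)⁻¹ = 1 := mul_inv_cancel₀ (by exact_mod_cast h1.ne')
    unfold qdR
    rw [hst, a1, a2, a3, a4, mul_div_assoc]
    linear_combination (qdF b x s (η * Complex.I) *
      (1 - Complex.exp (2 * π * b * Complex.I * η)) *
      (eb b (-cb b + b * Complex.I + ((1:ℝ):ℂ) * η * Complex.I) /
      eb b (-x - cb b + ((1:ℝ):ℂ) * η * Complex.I))) * hη
  have h := tendsto_nhds_unique (l5.congr' heq) tendsto_const_nhds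
  rw [← h]
  have hz := eb_z0 hb
  have hz0 : zeta0 b ≠ 0 := Complex.exp_ne_zero _
  have hz' : (zeta0 b)⁻¹ = -Complex.I * b * eb b (-cb b + b * Complex.I) :=
    (eq_inv_of_mul_eq_one_left hz).symm
  rw [hz']
  field_simp

lemma qdF_value {b : ℝ} (hb : 0 < b) (hb1 : b ≤ 1) {x : ℂ} (hx1 : -((b + b⁻¹) / 2) < x.im)
    {s : ℝ} (hs1 : x.im < s) (hs2 : s < 0) {u : ℂ}
    (hu : -((b + b⁻¹) / 2) < u.im ∧ u.im < (b + b⁻¹) / 2 + x.im) :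
    qdF b x s (u + cb b) = (zeta0 b)⁻¹ * eb b (u - x) / (eb b (-x - cb b) * eb b u) := by
  have h := qdR_value hb hb1 hx1 hs1 hs2 hu
  unfold qdR at h
  have n1 := eb_ne b u
  have n2 := eb_ne b (u - x)
  have n3 := eb_ne b (-x - cb b)
  generalize eb b u = A at *
  generalize eb b (u - x) = B at *
  generalize eb b (-x - cb b) = D at *
  generalize (zeta0 b)⁻¹ = Z at *
  field_simp at h ⊢
  linear_combination h

lemma zeta0_inv (b : ℝ) : zeta0 b⁻¹ = zeta0 b := by
  unfold zeta0; rw [cb_inv]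

lemma qdF_inv (b : ℝ) (x : ℂ) (s : ℝ) (v : ℂ) : qdF b⁻¹ x s v = qdF b x s v := by
  unfold qdF qdH
  simp only [eb_inv, cb_inv]

lemma qdF_value_all {b : ℝ} (hb : 0 < b) {x : ℂ} (hx1 : -((b + b⁻¹) / 2) < x.im)
    {s : ℝ} (hs1 : x.im < s) (hs2 : s < 0) {u : ℂ}
    (hu : -((b + b⁻¹) / 2) < u.im ∧ u.im < (b + b⁻¹) / 2 + x.im) :
    qdF b x s (u + cb b) = (zeta0 b)⁻¹ * eb b (u - x) / (eb b (-x - cb b) * eb b u) := by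
  rcases le_total b 1 with hb1 | hb1
  · exact qdF_value hb hb1 hx1 hs1 hs2 hu
  · have h := qdF_value (inv_pos.2 hb) (inv_le_one_of_one_le₀ hb1) (x := x) (s := s) (u := u)
      (by rw [inv_inv, add_comm]; exact hx1) hs1 hs2 (by rw [inv_inv, add_comm b⁻¹]; exact hu)
    simpa only [qdF_inv, zeta0_inv, eb_inv, cb_inv] using h

theorem statement9 (b : ℝ) (hb : 0 < b) (u x : ℂ)
    (hx₁ : -((b + b⁻¹) / 2) < x.im) (hx₂ : x.im < 0)
    (hu : |u.im| < (b + b⁻¹) / 2) (hux : |(u - x).im| < (b + b⁻¹) / 2)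
    (ε : ℝ) (hε₁ : 0 < ε) (hε₂ : ε < -x.im) :
    Integrable (stmt9Integrand b u x ε) ∧
    (∀ ε' : ℝ, 0 < ε' → ε' < -x.im →
      ∫ t : ℝ, stmt9Integrand b u x ε t = ∫ t : ℝ, stmt9Integrand b u x ε' t) ∧
    ∫ t : ℝ, stmt9Integrand b u x ε t =
      (zeta0 b)⁻¹ * eb b (u - x) / (eb b (-x - cb b) * eb b u) := by
  rw [abs_lt] at hu hux
  rw [Complex.sub_im] at hux
  have hfun : ∀ ε : ℝ, stmt9Integrand b u x ε = fun t : ℝ =>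
      Complex.exp (-Complex.I * (2 * π * (u + cb b)) * (t + ((-ε : ℝ) : ℂ) * Complex.I)) *
      qdH b x (t + ((-ε : ℝ) : ℂ) * Complex.I) := fun ε => funext (stmt9_eq b u x ε)
  have hval : ∀ ε : ℝ, 0 < ε → ε < -x.im → ∫ t : ℝ, stmt9Integrand b u x ε t =
      (zeta0 b)⁻¹ * eb b (u - x) / (eb b (-x - cb b) * eb b u) := by
    intro ε h1 h2
    rw [hfun]
    exact qdF_value_all hb hx₁ (s := -ε) (by linarith) (by linarith)
      ⟨by linarith, by linarith⟩
  refine ⟨?_, fun ε' h1 h2 => by rw [hval ε hε₁ hε₂, hval ε' h1 h2], hval ε hε₁ hε₂⟩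
  rw [hfun]
  have him : (u + cb b).im = u.im + (b + b⁻¹) / 2 := by rw [Complex.add_im, cb_im]
  exact qdF_integrable hb hx₁ (by linarith) (by linarith) (by rw [him]; linarith)
    (by rw [him]; linarith)

end
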